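/- arXiv:1310.8021 — 3 statements merged into one kernel-verified Lean document; each statement's English description precedes it below -/
import Mathlib

section
/- Let P be an N×N transition matrix in the closure of the set of reversible Markov matrices with positive stationary distribution, reversible with respect to π, with all eigenvalues nonnegative: 0 ≤ β_1 ≤ ··· ≤ β_{N-1} < β_N = 1. Let μ be any probability distribution on the state space. Define μ_1 = μ and μ_{j+1} via μ_j P = β_j μ_j + (1 - β_j) μ_{j+1} for 1 ≤ j ≤ N-1 (equivalently μ_j = μ · Π_{i<j} (P - β_i I)/(1 - β_i)). Then each μ_j has total mass 1, μ_N = π, and each μ_j has nonnegative entries (is a probability distribution). -/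
/-- The closure (in the space of `N × N` real matrices) of the set of Markov
transition matrices reversible with respect to a strictly positive stationary
distribution. -/
def RevClosure (N : ℕ) : Set (Matrix (Fin N) (Fin N) ℝ) :=
  closure {M | (∀ i j, 0 ≤ M i j) ∧ (∀ i, ∑ j, M i j = 1) ∧
    ∃ p : Fin N → ℝ, (∀ i, 0 < p i) ∧ (∑ i, p i = 1) ∧
      ∀ i j, p i * M i j = p j * M j i}

section

open Polynomial Finset
open scoped NNReal Matrix

/-- The Newton polynomial `∏ i < k, (X - ν i)`. -/
noncomputable def newtonPoly (ν : ℕ → ℝ) (k : ℕ) : ℝ[X] :=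
  ∏ i ∈ range k, (X - C (ν i))

/-- The convex cone generated by the first `n` Newton polynomials. -/
noncomputable def newtonCone (ν : ℕ → ℝ) (n : ℕ) : Submodule ℝ≥0 ℝ[X] :=
  Submodule.span ℝ≥0 (newtonPoly ν '' Set.Iio n)

lemma newtonPoly_succ (ν : ℕ → ℝ) (k : ℕ) :
    newtonPoly ν (k + 1) = newtonPoly ν k * (X - C (ν k)) :=
  prod_range_succ _ _

lemma newtonPoly_monic (ν : ℕ → ℝ) (k : ℕ) : (newtonPoly ν k).Monic :=
  monic_prod_of_monic _ _ fun i _ => monic_X_sub_C (ν i)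

lemma newtonPoly_degree (ν : ℕ → ℝ) (k : ℕ) : (newtonPoly ν k).degree = k := by
  simp [newtonPoly, degree_prod]

lemma newtonPoly_mem_newtonCone {ν : ℕ → ℝ} {k n : ℕ} (h : k < n) :
    newtonPoly ν k ∈ newtonCone ν n :=
  Submodule.subset_span ⟨k, h, rfl⟩

lemma newtonCone_mono (ν : ℕ → ℝ) {m n : ℕ} (h : m ≤ n) : newtonCone ν m ≤ newtonCone ν n :=
  Submodule.span_mono (Set.image_mono (Set.Iio_subset_Iio h))

lemma C_mul_mem_newtonCone {ν : ℕ → ℝ} {n : ℕ} {p : ℝ[X]} (hp : p ∈ newtonCone ν n)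
    {a : ℝ} (ha : 0 ≤ a) : C a * p ∈ newtonCone ν n := by
  rw [← smul_eq_C_mul]
  exact (newtonCone ν n).smul_mem ⟨a, ha⟩ hp

/-- Newton polynomials with smaller nodes lie in the cone of those with larger, decreasingly
ordered, nodes. -/
lemma newtonPoly_mem_newtonCone_of_le {ν η : ℕ → ℝ} {n : ℕ} (hν : AntitoneOn ν (Set.Iio n))
    (hη : ∀ i < n, η i ≤ ν i) :
    ∀ d ≤ n, newtonPoly η d ∈ newtonCone ν (d + 1) := by
  intro d
  induction d with
  | zero =>
    intro _
    have h : newtonPoly η 0 = newtonPoly ν 0 := by simp [newtonPoly]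
    rw [h]
    exact newtonPoly_mem_newtonCone one_pos
  | succ d ih =>
    intro hd
    rw [newtonPoly_succ]
    refine Submodule.span_induction
      (p := fun p _ => p * (X - C (η d)) ∈ newtonCone ν (d + 1 + 1)) ?_ ?_ ?_ ?_ (ih (by omega))
    · rintro _ ⟨j, hj, rfl⟩
      have hj : j < d + 1 := hj
      have h : newtonPoly ν j * (X - C (η d))
          = newtonPoly ν (j + 1) + C (ν j - η d) * newtonPoly ν j := by
        rw [newtonPoly_succ, C_sub]; ring
      rw [h]
      refine add_mem (newtonPoly_mem_newtonCone (by omega))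
        (C_mul_mem_newtonCone (newtonPoly_mem_newtonCone (by omega)) ?_)
      have h1 := hν (show j ∈ Set.Iio n from by simp; omega)
        (show d ∈ Set.Iio n from by simp; omega) (by omega : j ≤ d)
      linarith [hη d (by omega)]
    · simp
    · intro p q _ _ hp hq
      rw [add_mul]
      exact add_mem hp hq
    · intro a p _ hp
      rw [smul_mul_assoc]
      exact Submodule.smul_mem _ a hp

/-- Coefficients in the Newton basis of an element of the Newton cone are nonnegative. -/
lemma coeff_nonneg_of_mem_newtonCone {ν : ℕ → ℝ} {n : ℕ} {c : ℕ → ℝ}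
    (h : ∑ j ∈ range n, C (c j) * newtonPoly ν j ∈ newtonCone ν n) :
    ∀ j < n, 0 ≤ c j := by
  intro j hj
  let S : Polynomial.Sequence ℝ := ⟨newtonPoly ν, newtonPoly_degree ν⟩
  let b := S.basis fun i => by
    rw [show S i = newtonPoly ν i from rfl, (newtonPoly_monic ν i).leadingCoeff]
    exact isUnit_one
  have hb : ∀ i, b i = newtonPoly ν i := fun i => S.basis_eq_self _ i
  have key : ∀ p ∈ newtonCone ν n, 0 ≤ b.repr p j := by
    intro p hp
    induction hp using Submodule.span_induction with
    | mem p hp =>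
      obtain ⟨i, -, rfl⟩ := hp
      rw [← hb, b.repr_self, Finsupp.single_apply]
      split_ifs <;> norm_num
    | zero => simp
    | add p q _ _ hp hq => simpa using add_nonneg hp hq
    | smul a p _ hp =>
      have h : a • p = (a : ℝ) • p := rfl
      rw [h, map_smul]
      simpa using mul_nonneg a.2 hp
  have h2 := key _ h
  simp_rw [← smul_eq_C_mul, ← hb, map_sum, map_smul, b.repr_self] at h2
  simpa [Finsupp.single_apply, hj] using h2

namespace Matrix

/-- Expansion of the adjugate of the characteristic matrix in the Newton basis at the
eigenvalues. -/
lemma adjugate_charmatrix_eq_sum {n : ℕ} (A : Matrix (Fin n) (Fin n) ℝ) (ν : ℕ → ℝ)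
    (hA : A.charpoly = newtonPoly ν n) (x y : Fin n) :
    (charmatrix A).adjugate x y = ∑ j ∈ range n,
      C (aeval A (∏ i ∈ Ico (j + 1) n, (X - C (ν i))) x y) * newtonPoly ν j := by
  let D : ℕ → Matrix (Fin n) (Fin n) ℝ[X] := fun j =>
    (C : ℝ →+* ℝ[X]).mapMatrix (aeval A (∏ i ∈ Ico j n, (X - C (ν i))))
  have hD : ∀ j < n, charmatrix A * (newtonPoly ν j • D (j + 1))
      = newtonPoly ν (j + 1) • D (j + 1) - newtonPoly ν j • D j := by
    intro j hj
    have h1 : D j = ((C : ℝ →+* ℝ[X]).mapMatrix A - C (ν j) • 1) * D (j + 1) := by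
      simp only [D]
      rw [prod_eq_prod_Ico_succ_bot hj, map_mul, map_mul]
      congr 1
      simp only [map_sub, aeval_X, aeval_C]
      congr 1
      ext a b
      simp [algebraMap_matrix_apply, one_apply, apply_ite C]
    have h2 : charmatrix A = (X : ℝ[X]) • 1 - (C : ℝ →+* ℝ[X]).mapMatrix A := by
      rw [charmatrix, scalar_apply, smul_one_eq_diagonal]
    rw [h1, newtonPoly_succ, h2]
    simp only [sub_mul, smul_mul_assoc, one_mul, mul_smul_comm, smul_sub, mul_sub, sub_smul,
      smul_smul]
    module
  have hsum : charmatrix A * ∑ j ∈ range n, newtonPoly ν j • D (j + 1)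
      = A.charpoly • 1 := by
    rw [mul_sum, sum_congr rfl fun j hj => hD j (mem_range.mp hj),
      sum_range_sub (fun j => newtonPoly ν j • D j)]
    have h0 : D 0 = 0 := by
      simp only [D]
      rw [show (∏ i ∈ Ico 0 n, (X - C (ν i))) = A.charpoly by
        rw [hA, newtonPoly, range_eq_Ico], aeval_self_charpoly, map_zero]
    have hn : D n = 1 := by simp [D]
    rw [h0, hn, hA]
    simp
  have hadj : A.charpoly • (charmatrix A).adjugate
      = A.charpoly • ∑ j ∈ range n, newtonPoly ν j • D (j + 1) := by
    have h := congrArg (fun M => (charmatrix A).adjugate * M) hsum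
    simp only [← Matrix.mul_assoc, adjugate_mul] at h
    rw [show (charmatrix A).det = A.charpoly from rfl] at h
    simpa using h.symm
  have h := congrFun (congrFun hadj x) y
  simp only [smul_apply, smul_eq_mul] at h
  rw [mul_left_cancel₀ A.charpoly_monic.ne_zero h, sum_apply]
  refine sum_congr rfl fun j _ => ?_
  simp [D, mul_comm]

/-- `A` is orthogonally diagonalized by `U`, with eigenvalues `ν 0 ≥ ν 1 ≥ ⋯ ≥ ν (n - 1)`. -/
structure IsSpectralDecomposition {n : ℕ} (A U : Matrix (Fin n) (Fin n) ℝ) (ν : ℕ → ℝ) :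
    Prop where
  antitone : AntitoneOn ν (Set.Iio n)
  orthogonal : Uᵀ * U = 1
  eq : A = U * diagonal (fun i : Fin n => ν i) * Uᵀ

lemma IsSymm.exists_isSpectralDecomposition {n : ℕ} {A : Matrix (Fin n) (Fin n) ℝ}
    (hA : A.IsSymm) : ∃ U ν, IsSpectralDecomposition A U ν ∧ ∀ i ≥ n, ν i = 0 := by
  have hH : A.IsHermitian := by
    rw [IsHermitian, conjTranspose_eq_transpose_of_trivial]; exact hA
  let τ : Fin n ≃ Fin (Fintype.card (Fin n)) := finCongr (Fintype.card_fin n).symm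
  let σ : Fin n ≃ Fin n := τ.trans (Fintype.equivOfCardEq (Fintype.card_fin _))
  let V : Matrix (Fin n) (Fin n) ℝ := hH.eigenvectorUnitary
  have hν : ∀ i : Fin n, hH.eigenvalues (σ i) = hH.eigenvalues₀ (τ i) := by
    intro i
    simp [IsHermitian.eigenvalues, σ]
  have hVV : Vᵀ * V = 1 := by
    have h := (mem_unitaryGroup_iff' (A := V)).mp hH.eigenvectorUnitary.2
    rwa [star_eq_conjTranspose, conjTranspose_eq_transpose_of_trivial] at h
  have hAV : A = V * diagonal hH.eigenvalues * Vᵀ := by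
    have h := hH.spectral_theorem
    rw [Unitary.conjStarAlgAut_apply] at h
    rw [← conjTranspose_eq_transpose_of_trivial]
    exact h
  refine ⟨V.submatrix id σ, fun i => if h : i < n then hH.eigenvalues (σ ⟨i, h⟩) else 0,
    ⟨?_, ?_, ?_⟩, fun i hi => dif_neg hi.not_gt⟩
  · intro i hi j hj hij
    have hi : i < n := hi
    have hj : j < n := hj
    simp only [hi, hj, dite_true, hν]
    exact hH.eigenvalues₀_antitone hij
  · rw [transpose_submatrix, ← submatrix_mul _ _ _ _ _ Function.bijective_id, hVV]
    simp
  · have h : (diagonal fun i : Fin n =>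
        if h : (i : ℕ) < n then hH.eigenvalues (σ ⟨i, h⟩) else 0)
        = (diagonal hH.eigenvalues).submatrix σ σ := by
      rw [submatrix_diagonal_equiv]
      congr 1
      ext i
      simp
    rw [h, transpose_submatrix, ← submatrix_mul _ _ _ _ _ σ.bijective,
      ← submatrix_mul _ _ _ _ _ σ.bijective, ← hAV]
    simp

namespace IsSpectralDecomposition

variable {n : ℕ} {A U : Matrix (Fin n) (Fin n) ℝ} {ν : ℕ → ℝ}

lemma charpoly_eq (h : IsSpectralDecomposition A U ν) : A.charpoly = newtonPoly ν n := by
  rw [h.eq, charpoly_mul_comm, ← Matrix.mul_assoc, h.orthogonal, Matrix.one_mul,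
    charpoly_diagonal, newtonPoly, prod_range]

lemma isSymm (h : IsSpectralDecomposition A U ν) : A.IsSymm := by
  rw [IsSymm, h.eq]
  simp [Matrix.mul_assoc]

/-- The quadratic form of `A` in spectral coordinates. -/
lemma dotProduct_mulVec (h : IsSpectralDecomposition A U ν) (x : Fin n → ℝ) :
    x ⬝ᵥ A *ᵥ x = ∑ i : Fin n, ν i * (Uᵀ *ᵥ x) i ^ 2 := by
  conv_lhs => rw [h.eq]
  rw [← mulVec_mulVec, ← mulVec_mulVec, Matrix.dotProduct_mulVec, ← mulVec_transpose, dotProduct]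
  refine sum_congr rfl fun i _ => ?_
  rw [mulVec_diagonal]
  ring

lemma dotProduct_self (h : IsSpectralDecomposition A U ν) (x : Fin n → ℝ) :
    x ⬝ᵥ x = ∑ i : Fin n, (Uᵀ *ᵥ x) i ^ 2 := by
  have hU : U * Uᵀ = 1 := mul_eq_one_comm.mp h.orthogonal
  rw [show x ⬝ᵥ x = x ⬝ᵥ (U * Uᵀ) *ᵥ x by rw [hU, one_mulVec], ← mulVec_mulVec,
    Matrix.dotProduct_mulVec, ← mulVec_transpose, dotProduct]
  exact sum_congr rfl fun i _ => (sq _).symm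

/-- Upper half of Cauchy interlacing. -/
lemma interlacing {A U : Matrix (Fin (n + 1)) (Fin (n + 1)) ℝ} {V : Matrix (Fin n) (Fin n) ℝ}
    {η : ℕ → ℝ} (hA : IsSpectralDecomposition A U ν) (r : Fin (n + 1))
    (hB : IsSpectralDecomposition (A.submatrix r.succAbove r.succAbove) V η) :
    ∀ k < n, η k ≤ ν k := by
  intro k hk
  let emb : (Fin n → ℝ) →ₗ[ℝ] (Fin (n + 1) → ℝ) :=
    { toFun := fun y => r.insertNth 0 y
      map_add' := fun y z => by
        ext i
        refine Fin.succAboveCases r ?_ (fun i => ?_) i <;> simp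
      map_smul' := fun a y => by
        ext i
        refine Fin.succAboveCases r ?_ (fun i => ?_) i <;> simp }
  let pad : (Fin (k + 1) → ℝ) →ₗ[ℝ] (Fin n → ℝ) :=
    { toFun := fun c i => if h : (i : ℕ) ≤ k then c ⟨i, Nat.lt_succ_of_le h⟩ else 0
      map_add' := fun y z => by
        ext i; by_cases h : (i : ℕ) ≤ k <;> simp [h]
      map_smul' := fun a y => by
        ext i; by_cases h : (i : ℕ) ≤ k <;> simp [h] }
  let F : (Fin (k + 1) → ℝ) →ₗ[ℝ] (Fin (n + 1) → ℝ) :=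
    Uᵀ.mulVecLin ∘ₗ emb ∘ₗ V.mulVecLin ∘ₗ pad
  let G : (Fin (k + 1) → ℝ) →ₗ[ℝ] (Fin k → ℝ) :=
    LinearMap.funLeft ℝ ℝ (Fin.castLE (by omega : k ≤ n + 1)) ∘ₗ F
  obtain ⟨c, hc, hc0⟩ := (Submodule.ne_bot_iff _).mp
    (LinearMap.ker_ne_bot_of_finrank_lt (f := G) (by simp))
  have hG : ∀ i : Fin (n + 1), (i : ℕ) < k → F c i = 0 := by
    intro i hi
    exact congrFun (LinearMap.mem_ker.mp hc) ⟨i, hi⟩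
  set y := V *ᵥ pad c with hy
  have hVy : Vᵀ *ᵥ y = pad c := by
    rw [hy, mulVec_mulVec, hB.orthogonal, one_mulVec]
  have hquad : emb y ⬝ᵥ A *ᵥ emb y = y ⬝ᵥ A.submatrix r.succAbove r.succAbove *ᵥ y := by
    simp [dotProduct, mulVec, Fin.sum_univ_succAbove _ r, emb]
  have hnorm : emb y ⬝ᵥ emb y = y ⬝ᵥ y := by
    simp [dotProduct, Fin.sum_univ_succAbove _ r, emb]
  rw [hA.dotProduct_mulVec, hB.dotProduct_mulVec, hVy] at hquad
  rw [hA.dotProduct_self, hB.dotProduct_self, hVy] at hnorm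
  have hpos : 0 < ∑ i, pad c i ^ 2 := by
    obtain ⟨i, hi⟩ := Function.ne_iff.mp hc0
    refine sum_pos' (fun i _ => sq_nonneg _) ⟨⟨i, by omega⟩, mem_univ _, ?_⟩
    have h : pad c ⟨i, by omega⟩ = c i := by simp [pad, Nat.le_of_lt_succ i.2]
    rw [h]
    exact sq_pos_of_ne_zero hi
  have hupper : ∑ i : Fin (n + 1), ν i * (Uᵀ *ᵥ emb y) i ^ 2 ≤ ν k * ∑ i, (Uᵀ *ᵥ emb y) i ^ 2 := by
    rw [mul_sum]
    refine sum_le_sum fun i _ => ?_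
    rcases lt_or_ge (i : ℕ) k with hi | hi
    · have h : (Uᵀ *ᵥ emb y) i = 0 := hG i hi
      simp [h]
    · exact mul_le_mul_of_nonneg_right (hA.antitone (show k < n + 1 by omega) i.2 hi)
        (sq_nonneg _)
  have hlower : η k * ∑ i, pad c i ^ 2 ≤ ∑ i : Fin n, η i * pad c i ^ 2 := by
    rw [mul_sum]
    refine sum_le_sum fun i _ => ?_
    by_cases hi : (i : ℕ) ≤ k
    · exact mul_le_mul_of_nonneg_right (hB.antitone (by simp) (by simp; omega) (by omega))
        (sq_nonneg _)
    · have h : pad c i = 0 := by simp [pad, hi]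
      simp [h]
  rw [hquad, hnorm] at hupper
  exact le_of_mul_le_mul_right (hlower.trans hupper) hpos

end IsSpectralDecomposition

/-- The entries of the adjugate of the characteristic matrix of a nonnegative symmetric matrix
lie in the Newton cone of its decreasingly ordered eigenvalues. -/
theorem adjugate_charmatrix_mem_newtonCone : ∀ {n : ℕ} {A U : Matrix (Fin n) (Fin n) ℝ}
    {ν : ℕ → ℝ}, IsSpectralDecomposition A U ν → (∀ x y, 0 ≤ A x y) → ∀ x y,
    (charmatrix A).adjugate x y ∈ newtonCone ν n := by
  intro n
  induction n with
  | zero => intro A U ν _ _ x; exact x.elim0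
  | succ n ih =>
    intro A U ν hA hnonneg x r
    set B := A.submatrix r.succAbove r.succAbove with hBdef
    have hBsymm : B.IsSymm := by
      rw [IsSymm, hBdef, transpose_submatrix, hA.isSymm.eq]
    obtain ⟨V, η, hB, -⟩ := hBsymm.exists_isSpectralDecomposition
    have hle := hA.interlacing r hB
    have hanti : AntitoneOn ν (Set.Iio n) :=
      hA.antitone.mono (Set.Iio_subset_Iio n.le_succ)
    have hcone : newtonCone η n ≤ newtonCone ν (n + 1) := by
      refine Submodule.span_le.mpr ?_
      rintro _ ⟨d, hd, rfl⟩
      have hd : d < n := hd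
      exact newtonCone_mono ν (by omega)
        (newtonPoly_mem_newtonCone_of_le hanti hle d hd.le)
    have hcm : (charmatrix A).submatrix r.succAbove r.succAbove = charmatrix B := by
      ext a b
      simp [charmatrix_apply, diagonal_apply, hBdef]
    have hdiag : (charmatrix A).adjugate r r = B.charpoly := by
      rw [adjugate_fin_succ_eq_det_submatrix, hcm, ← two_mul, pow_mul]
      simp [charpoly]
    rcases Fin.eq_self_or_eq_succAbove r x with rfl | ⟨m, rfl⟩
    · rw [hdiag, hB.charpoly_eq]
      exact newtonPoly_mem_newtonCone_of_le hanti hle n le_rfl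
    · have hcol : charmatrix B *ᵥ (fun m => (charmatrix A).adjugate (r.succAbove m) r)
          = B.charpoly • fun l => C (A (r.succAbove l) r) := by
        ext1 l
        have h := congrFun (congrFun (mul_adjugate (charmatrix A)) (r.succAbove l)) r
        rw [Matrix.mul_apply, Fin.sum_univ_succAbove _ r, hdiag] at h
        simp only [smul_apply, one_apply, Fin.succAbove_ne, if_false, smul_zero] at h
        rw [charmatrix_apply_ne _ _ _ (Fin.succAbove_ne r l)] at h
        rw [← hcm]
        simp only [mulVec, dotProduct, submatrix_apply, Pi.smul_apply, smul_eq_mul]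
        linear_combination h
      have hoff : (charmatrix A).adjugate (r.succAbove m) r
          = ∑ l, (charmatrix B).adjugate m l * C (A (r.succAbove l) r) := by
        have h := congrFun (congrArg ((charmatrix B).adjugate *ᵥ ·) hcol) m
        simp only [mulVec_mulVec, adjugate_mul, smul_mulVec, one_mulVec, mulVec_smul,
          Pi.smul_apply, smul_eq_mul] at h
        exact mul_left_cancel₀ B.charpoly_monic.ne_zero h
      rw [hoff]
      refine sum_mem fun l _ => ?_
      rw [mul_comm]
      exact C_mul_mem_newtonCone
        (hcone (ih hB (fun _ _ => hnonneg _ _) m l)) (hnonneg _ _)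

/-- The **Micchelli–Willoughby theorem**: for a nonnegative symmetric matrix `A`, the products of
`A - ν i` over any initial segment of the increasingly ordered eigenvalues are nonnegative. -/
theorem IsSpectralDecomposition.aeval_prod_nonneg {n : ℕ} {A U : Matrix (Fin n) (Fin n) ℝ}
    {ν : ℕ → ℝ} (hA : IsSpectralDecomposition A U ν) (hnonneg : ∀ x y, 0 ≤ A x y) (j : ℕ)
    (x y : Fin n) : 0 ≤ aeval A (∏ i ∈ Ico j n, (X - C (ν i))) x y := by
  rcases j with - | j
  · rw [← range_eq_Ico, ← newtonPoly, ← hA.charpoly_eq, aeval_self_charpoly]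
    simp
  rcases lt_or_ge j n with hj | hj
  · have h := adjugate_charmatrix_mem_newtonCone hA hnonneg x y
    rw [adjugate_charmatrix_eq_sum A ν hA.charpoly_eq] at h
    exact coeff_nonneg_of_mem_newtonCone h j hj
  · rw [Ico_eq_empty (by omega), prod_empty, map_one, one_apply]
    split_ifs <;> norm_num

/-- Eigenvalues of a stochastic matrix lie in `[-1, 1]`. -/
lemma abs_le_one_of_isRoot_charpoly {n : ℕ} {M : Matrix (Fin n) (Fin n) ℝ}
    (hM : ∀ x y, 0 ≤ M x y) (hrow : ∀ x, ∑ y, M x y = 1) {a : ℝ} (ha : M.charpoly.IsRoot a) :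
    |a| ≤ 1 := by
  rw [← charpoly_toLin', ← Module.End.hasEigenvalue_iff_isRoot_charpoly] at ha
  obtain ⟨k, hk⟩ := eigenvalue_mem_ball ha
  rw [Metric.mem_closedBall, Real.dist_eq] at hk
  have h1 : ∑ j ∈ univ.erase k, ‖M k j‖ = ∑ j ∈ univ.erase k, M k j :=
    sum_congr rfl fun j _ => Real.norm_of_nonneg (hM k j)
  have h2 := add_sum_erase univ (M k) (mem_univ k)
  rw [hrow] at h2
  rw [h1] at hk
  have h3 := abs_add_le (a - M k k) (M k k)
  rw [sub_add_cancel, abs_of_nonneg (hM k k)] at h3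
  linarith

/-- The matrix `M` has eigenvalues `ν 0 ≥ ⋯ ≥ ν (n - 1)`, and the products of `M - ν i` over final
segments of indices are nonnegative. -/
structure HasNonnegNewtonProducts {n : ℕ} (M : Matrix (Fin n) (Fin n) ℝ) (ν : ℕ → ℝ) :
    Prop where
  antitone : AntitoneOn ν (Set.Iio n)
  charpoly_eq : M.charpoly = newtonPoly ν n
  nonneg : ∀ j x y, 0 ≤ aeval M (∏ i ∈ Ico j n, (X - C (ν i))) x y

end Matrix

lemma SemiconjBy.aeval {R : Type*} [Ring R] [Algebra ℝ R] {a x y : R} (h : SemiconjBy a x y)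
    (p : ℝ[X]) : SemiconjBy a (aeval x p) (aeval y p) := by
  induction p using Polynomial.induction_on' with
  | add p q hp hq => simpa using hp.add_right hq
  | monomial k c =>
    simp only [aeval_monomial]
    exact SemiconjBy.mul_right ((Algebra.commutes c a).symm) (h.pow_right k)

namespace Matrix

/-- A matrix reversible with respect to a positive distribution satisfies the conclusion of the
Micchelli–Willoughby theorem. -/
lemma exists_hasNonnegNewtonProducts_of_reversible {n : ℕ} {M : Matrix (Fin n) (Fin n) ℝ}
    (hM : ∀ x y, 0 ≤ M x y) (hrow : ∀ x, ∑ y, M x y = 1) {p : Fin n → ℝ} (hp : ∀ x, 0 < p x)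
    (hrev : ∀ x y, p x * M x y = p y * M y x) :
    ∃ ν : ℕ → ℝ, (∀ i, ν i ∈ Set.Icc (-1) 1) ∧ HasNonnegNewtonProducts M ν := by
  let d : Fin n → ℝ := fun x => √(p x)
  have hd : ∀ x, 0 < d x := fun x => Real.sqrt_pos.mpr (hp x)
  have hdd : ∀ x, d x * d x = p x := fun x => Real.mul_self_sqrt (hp x).le
  let S : Matrix (Fin n) (Fin n) ℝ := diagonal d * M * diagonal fun x => (d x)⁻¹
  have hS : ∀ x y, S x y = d x * M x y * (d y)⁻¹ := fun x y => by
    simp [S, mul_diagonal, diagonal_mul]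
  have hSsymm : S.IsSymm := by
    ext x y
    rw [transpose_apply, hS, hS]
    have hx := (hd x).ne'
    have hy := (hd y).ne'
    have h := hrev x y
    rw [← hdd, ← hdd] at h
    field_simp
    linear_combination -h
  have hSnonneg : ∀ x y, 0 ≤ S x y := fun x y => by
    rw [hS]
    exact mul_nonneg (mul_nonneg (hd x).le (hM x y)) (inv_nonneg.mpr (hd y).le)
  have hinv : (diagonal fun x => (d x)⁻¹) * diagonal d = 1 := by
    rw [diagonal_mul_diagonal, ← diagonal_one]
    exact congrArg _ (funext fun x => inv_mul_cancel₀ (hd x).ne')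
  have hsemi : SemiconjBy (diagonal d) M S := by
    change diagonal d * M = S * diagonal d
    rw [Matrix.mul_assoc, hinv, Matrix.mul_one]
  obtain ⟨U, ν, hν, hν0⟩ := hSsymm.exists_isSpectralDecomposition
  have hchar : M.charpoly = newtonPoly ν n := by
    rw [← hν.charpoly_eq, charpoly_mul_comm, ← Matrix.mul_assoc, hinv, Matrix.one_mul]
  refine ⟨ν, fun i => ?_, hν.antitone, hchar, fun j x y => ?_⟩
  · rw [Set.mem_Icc, ← abs_le]
    rcases lt_or_ge i n with hi | hi
    · refine abs_le_one_of_isRoot_charpoly hM hrow ?_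
      rw [hchar, IsRoot, newtonPoly, eval_prod]
      exact prod_eq_zero (mem_range.mpr hi) (by simp)
    · simp [hν0 i hi]
  · have h := congrFun (congrFun (hsemi.aeval (∏ i ∈ Ico j n, (X - C (ν i)))).eq x) y
    rw [diagonal_mul, mul_diagonal] at h
    refine nonneg_of_mul_nonneg_right ?_ (hd x)
    rw [h]
    exact mul_nonneg (hν.aeval_prod_nonneg hSnonneg j x y) (hd y).le

lemma continuous_aeval_prod_X_sub_C {n : ℕ} (s : Finset ℕ) :
    Continuous fun z : Matrix (Fin n) (Fin n) ℝ × (ℕ → ℝ) =>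
      aeval z.1 (∏ i ∈ s, (X - C (z.2 i))) := by
  induction s using Finset.induction_on with
  | empty => simpa using continuous_const
  | insert a s ha ih =>
    simp only [prod_insert ha, map_mul, map_sub, aeval_X, aeval_C, algebraMap_eq_diagonal]
    refine Continuous.mul (continuous_fst.sub (Continuous.matrix_diagonal ?_)) ih
    exact continuous_pi fun _ => (continuous_apply a).comp continuous_snd

lemma isClosed_setOf_hasNonnegNewtonProducts (n : ℕ) :
    IsClosed {z : Matrix (Fin n) (Fin n) ℝ × (ℕ → ℝ) | HasNonnegNewtonProducts z.1 z.2} := by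
  have hset : {z : Matrix (Fin n) (Fin n) ℝ × (ℕ → ℝ) | HasNonnegNewtonProducts z.1 z.2} =
      (⋂ i ∈ Set.Iio n, ⋂ j ∈ Set.Iio n, ⋂ _ : i ≤ j,
        {z : Matrix (Fin n) (Fin n) ℝ × (ℕ → ℝ) | z.2 j ≤ z.2 i}) ∩
      ((⋂ t : ℝ, {z : Matrix (Fin n) (Fin n) ℝ × (ℕ → ℝ) |
        (scalar (Fin n) t - z.1).det = ∏ i ∈ range n, (t - z.2 i)}) ∩
      ⋂ (j : ℕ) (x : Fin n) (y : Fin n),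
        {z : Matrix (Fin n) (Fin n) ℝ × (ℕ → ℝ) |
          0 ≤ aeval z.1 (∏ i ∈ Ico j n, (X - C (z.2 i))) x y}) := by
    ext z
    simp only [Set.mem_inter_iff, Set.mem_iInter, Set.mem_ofPred_eq]
    refine ⟨fun h => ⟨h.antitone, fun t => ?_, h.nonneg⟩,
      fun ⟨h1, h2, h3⟩ => ⟨h1, Polynomial.funext fun t => ?_, h3⟩⟩
    · rw [← eval_charpoly, h.charpoly_eq]
      simp [newtonPoly, eval_prod]
    · rw [eval_charpoly, h2]
      simp [newtonPoly, eval_prod]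
  have hν : ∀ i, Continuous fun z : Matrix (Fin n) (Fin n) ℝ × (ℕ → ℝ) => z.2 i :=
    fun i => (continuous_apply i).comp continuous_snd
  rw [hset]
  refine IsClosed.inter ?_ (IsClosed.inter ?_ ?_)
  · exact isClosed_biInter fun i _ => isClosed_biInter fun j _ => isClosed_iInter fun _ =>
      isClosed_le (hν j) (hν i)
  · exact isClosed_iInter fun t => isClosed_eq
      (Continuous.matrix_det (continuous_const.sub continuous_fst))
      (continuous_finsetProd _ fun i _ => continuous_const.sub (hν i))
  · exact isClosed_iInter fun j => isClosed_iInter fun x => isClosed_iInter fun y =>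
      isClosed_le continuous_const ((continuous_aeval_prod_X_sub_C _).matrix_elem x y)

lemma exists_hasNonnegNewtonProducts_of_mem_revClosure {n : ℕ} {M : Matrix (Fin n) (Fin n) ℝ}
    (hM : M ∈ RevClosure n) : ∃ ν, HasNonnegNewtonProducts M ν := by
  let K : Set (ℕ → ℝ) := Set.univ.pi fun _ => Set.Icc (-1) 1
  have : CompactSpace K :=
    isCompact_iff_compactSpace.mp (isCompact_univ_pi fun _ => isCompact_Icc)
  let T : Set (Matrix (Fin n) (Fin n) ℝ × K) := {z | HasNonnegNewtonProducts z.1 z.2}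
  have hT : IsClosed T := (isClosed_setOf_hasNonnegNewtonProducts n).preimage
    (continuous_fst.prodMk (continuous_subtype_val.comp continuous_snd))
  have hsub : RevClosure n ⊆ Prod.fst '' T := by
    refine closure_minimal ?_ (isClosedMap_fst_of_compactSpace _ hT)
    rintro M ⟨h0, h1, p, hp, -, hrev⟩
    obtain ⟨ν, hνK, hν⟩ := exists_hasNonnegNewtonProducts_of_reversible h0 h1 hp hrev
    exact ⟨⟨M, ν, fun i _ => hνK i⟩, hν, rfl⟩
  obtain ⟨⟨_, ν⟩, hν, rfl⟩ := hsub hM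
  exact ⟨ν, hν⟩

lemma sum_row_eq_one_of_mem_revClosure {n : ℕ} {M : Matrix (Fin n) (Fin n) ℝ}
    (hM : M ∈ RevClosure n) (x : Fin n) : ∑ y, M x y = 1 := by
  refine closure_minimal (t := {M : Matrix (Fin n) (Fin n) ℝ | ∑ y, M x y = 1})
    (fun M h => h.2.1 x) (isClosed_eq ?_ continuous_const) hM
  exact continuous_finsetSum _ fun y _ => continuous_id.matrix_elem x y

/-- The decreasing enumeration of the eigenvalues is the reverse of the increasing one. -/
lemma HasNonnegNewtonProducts.eq_rev {n : ℕ} {M : Matrix (Fin n) (Fin n) ℝ} {ν : ℕ → ℝ}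
    (h : HasNonnegNewtonProducts M ν) {β : Fin n → ℝ} (hβ : Monotone β)
    (hchar : M.charpoly = ∏ j, (X - C (β j))) (k : Fin n) : ν k.rev = β k := by
  have hmono : Monotone fun k : Fin n => ν k.rev := fun i j hij =>
    h.antitone j.rev.2 i.rev.2 (Fin.rev_le_rev.mpr hij)
  have hprod : ∏ j, (X - C (β j)) = ∏ j : Fin n, (X - C (ν j.rev)) := by
    rw [← hchar, h.charpoly_eq, newtonPoly, prod_range]
    exact (Equiv.prod_comp Fin.revPerm fun j : Fin n => X - C (ν j)).symm
  have hroots : ∀ f : Fin n → ℝ, (∏ j, (X - C (f j))).roots = ↑(List.ofFn f) := by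
    intro f
    rw [← Fin.univ_val_map, ← roots_multiset_prod_X_sub_C (Multiset.map f univ.val),
      Multiset.map_map]
    rfl
  have hperm := congrArg roots hprod
  rw [hroots, hroots, Multiset.coe_eq_coe] at hperm
  have h := List.ofFn_injective (hperm.eq_of_sortedLE hβ.sortedLE_ofFn hmono.sortedLE_ofFn)
  exact (congrFun h k).symm

/-- A simple eigenvalue has at most one left eigenvector of total mass one. -/
lemma eq_of_vecMul_eq_self {n : ℕ} {M : Matrix (Fin n) (Fin n) ℝ}
    (hM : M.charpoly.rootMultiplicity 1 ≤ 1) {v w : Fin n → ℝ} (hv : v ᵥ* M = v)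
    (hw : w ᵥ* M = w) (hv1 : ∑ x, v x = 1) (hw1 : ∑ x, w x = 1) : v = w := by
  have hfin := LinearMap.finrank_eigenspace_le (toLin' Mᵀ) 1
  rw [charpoly_toLin', charpoly_transpose] at hfin
  obtain ⟨u, hu⟩ := finrank_le_one_iff.mp (hfin.trans hM)
  have key : ∀ z : Fin n → ℝ, z ᵥ* M = z → ∃ c : ℝ, c • (u : Fin n → ℝ) = z := by
    intro z hz
    have hmem : z ∈ Module.End.eigenspace (toLin' Mᵀ) 1 := by
      rw [Module.End.mem_eigenspace_iff, toLin'_apply, mulVec_transpose, hz, one_smul]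
    obtain ⟨c, hc⟩ := hu ⟨z, hmem⟩
    exact ⟨c, congrArg Subtype.val hc⟩
  obtain ⟨a, rfl⟩ := key v hv
  obtain ⟨b, rfl⟩ := key w hw
  simp only [Pi.smul_apply, smul_eq_mul, ← mul_sum] at hv1 hw1
  have hs : ∑ x, (u : Fin n → ℝ) x ≠ 0 := right_ne_zero_of_mul_eq_one hv1
  rw [mul_right_cancel₀ hs (hv1.trans hw1.symm)]

end Matrix

/-- The iterates of the local-equilibrium recursion as multiples of Newton products. -/
lemma vecMul_aeval_prod_eq_smul {N : ℕ} {P : Matrix (Fin N) (Fin N) ℝ}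
    {β : Fin N → ℝ} {ν : ℕ → ℝ} (hν : ∀ k : Fin N, ν k.rev = β k) {μseq : ℕ → Fin N → ℝ}
    (hrec : ∀ j : Fin N, (j : ℕ) < N - 1 → ∀ y,
      ∑ x, μseq j x * P x y = β j * μseq j y + (1 - β j) * μseq (j + 1) y) :
    ∀ k ≤ N - 1, μseq 0 ᵥ* aeval P (∏ i ∈ Ico (N - k) N, (X - C (ν i)))
      = (∏ i ∈ Ico (N - k) N, (1 - ν i)) • μseq k := by
  intro k
  induction k with
  | zero => simp
  | succ k ih =>
    intro hk
    have hνk : ν (N - (k + 1)) = β ⟨k, by omega⟩ := by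
      rw [← hν]; rfl
    have hlt : N - (k + 1) < N := by omega
    have hsucc : N - (k + 1) + 1 = N - k := by omega
    have hstep : μseq k ᵥ* P - β ⟨k, by omega⟩ • μseq k
        = (1 - β ⟨k, by omega⟩) • μseq (k + 1) := by
      ext y
      have h := hrec ⟨k, by omega⟩ (Nat.lt_of_succ_le hk) y
      simp only [Pi.sub_apply, Pi.smul_apply, smul_eq_mul, Matrix.vecMul, dotProduct]
      linarith
    rw [prod_eq_prod_Ico_succ_bot hlt, prod_eq_prod_Ico_succ_bot hlt, hsucc,
      mul_comm, map_mul, ← Matrix.vecMul_vecMul, ih (by omega), hνk, map_sub, aeval_X, aeval_C,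
      Matrix.vecMul_sub, Algebra.algebraMap_eq_smul_one, Matrix.vecMul_smul, Matrix.vecMul_one,
      Matrix.smul_vecMul, mul_comm, mul_smul, ← hstep, smul_sub, smul_comm]

end

/-- Proposition 3.1 of the paper (local equilibria): for reversible `P` with
nonnegative eigenvalues `0 ≤ β_1 ≤ ⋯ ≤ β_{N-1} < β_N = 1` and any initial probability
distribution `μ`, the measures `μ_j` defined by `μ_1 = μ` and
`μ_j P = β_j μ_j + (1-β_j) μ_{j+1}` all have total mass `1`, satisfy `μ_N = π`, and
have nonnegative entries.  (Indices are shifted down by one: `μseq j` is the paper's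
`μ_{j+1}` and `β ⟨j⟩` is the paper's `β_{j+1}`.) -/
theorem local_equilibria (N : ℕ) (hN : 2 ≤ N)
    (P : Matrix (Fin N) (Fin N) ℝ) (hPcl : P ∈ RevClosure N)
    (piv : Fin N → ℝ) (hpiv0 : ∀ i, 0 ≤ piv i) (hpiv1 : ∑ i, piv i = 1)
    (hstat : ∀ j, ∑ i, piv i * P i j = piv j)
    (hrev : ∀ i j, piv i * P i j = piv j * P j i)
    (β : Fin N → ℝ)
    (hchar : P.charpoly = ∏ j, (Polynomial.X - Polynomial.C (β j)))
    (hmono : Monotone β) (hβ0 : ∀ j, 0 ≤ β j)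
    (hβlt : ∀ j : Fin N, (j : ℕ) < N - 1 → β j < 1)
    (hβlast : ∀ j : Fin N, (j : ℕ) = N - 1 → β j = 1)
    (μ : Fin N → ℝ) (hμ0 : ∀ x, 0 ≤ μ x) (hμ1 : ∑ x, μ x = 1)
    (μseq : ℕ → Fin N → ℝ) (hμinit : μseq 0 = μ)
    (hrec : ∀ j, ∀ h : j < N - 1, ∀ y,
      ∑ x, μseq j x * P x y
        = β ⟨j, by omega⟩ * μseq j y + (1 - β ⟨j, by omega⟩) * μseq (j + 1) y) :
    (∀ j ≤ N - 1, ∑ x, μseq j x = 1) ∧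
    μseq (N - 1) = piv ∧
    (∀ j ≤ N - 1, ∀ x, 0 ≤ μseq j x) := by
  have hN1 : 0 < N := by omega
  obtain ⟨ν, hν⟩ := Matrix.exists_hasNonnegNewtonProducts_of_mem_revClosure hPcl
  have hrow := Matrix.sum_row_eq_one_of_mem_revClosure hPcl
  have hνβ := hν.eq_rev hmono hchar
  have hprod := vecMul_aeval_prod_eq_smul hνβ fun j hj => hrec j hj
  have hmass : ∀ j ≤ N - 1, ∑ x, μseq j x = 1 := by
    intro j
    induction j with
    | zero => intro _; rw [hμinit, hμ1]
    | succ j ih =>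
      intro hj
      have h := Finset.sum_congr (rfl : (Finset.univ : Finset (Fin N)) = Finset.univ)
        fun y _ => hrec j (by omega) y
      rw [Finset.sum_comm, Finset.sum_add_distrib, ← Finset.mul_sum, ← Finset.mul_sum] at h
      simp_rw [← Finset.mul_sum, hrow, mul_one] at h
      rw [ih (by omega)] at h
      have hlt := hβlt ⟨j, by omega⟩ (by simp; omega)
      have hne : 1 - β ⟨j, by omega⟩ ≠ 0 := by linarith
      exact mul_left_cancel₀ hne (by linarith)
  have hpos : ∀ j ≤ N - 1, 0 < ∏ i ∈ Finset.Ico (N - j) N, (1 - ν i) := by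
    intro j hj
    refine Finset.prod_pos fun i hi => ?_
    obtain ⟨h1, h2⟩ := Finset.mem_Ico.mp hi
    have h := hνβ (Fin.rev ⟨i, h2⟩)
    rw [Fin.rev_rev] at h
    have hlt := hβlt (Fin.rev ⟨i, h2⟩) (by rw [Fin.val_rev]; simp; omega)
    have h' : ν i = β (Fin.rev ⟨i, h2⟩) := h
    linarith
  refine ⟨hmass, ?_, fun j hj x => ?_⟩
  · have hν0 : ν 0 = 1 := by
      have h := hνβ (Fin.rev ⟨0, hN1⟩)
      rw [Fin.rev_rev] at h
      exact h.trans (hβlast _ (by simp [Fin.val_rev]))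
    have hIco : (Polynomial.X - Polynomial.C (ν 0)) *
        ∏ i ∈ Finset.Ico 1 N, (Polynomial.X - Polynomial.C (ν i)) = P.charpoly := by
      rw [hν.charpoly_eq, newtonPoly, Finset.range_eq_Ico, Finset.prod_eq_prod_Ico_succ_bot hN1]
    have hN1' : N - (N - 1) = 1 := by omega
    have hlast := hprod (N - 1) le_rfl
    have hposlast := hpos (N - 1) le_rfl
    rw [hN1'] at hlast hposlast
    have hfix : Matrix.vecMul (μseq (N - 1)) P = μseq (N - 1) := by
      have h := congrArg (fun v => Matrix.vecMul v (P - 1)) hlast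
      simp only [Matrix.vecMul_vecMul, Matrix.smul_vecMul] at h
      have hCH : Polynomial.aeval P (∏ i ∈ Finset.Ico 1 N,
          (Polynomial.X - Polynomial.C (ν i))) * (P - 1) = 0 := by
        have h0 := P.aeval_self_charpoly
        rw [← hIco, mul_comm, map_mul, hν0] at h0
        simpa using h0
      rw [hCH, Matrix.vecMul_zero] at h
      have h1 := (smul_eq_zero.mp h.symm).resolve_left hposlast.ne'
      rwa [Matrix.vecMul_sub, Matrix.vecMul_one, sub_eq_zero] at h1
    refine Matrix.eq_of_vecMul_eq_self ?_ hfix (funext hstat) (hmass _ le_rfl) hpiv1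
    rw [← hIco, hν0, Polynomial.rootMultiplicity_mul, Polynomial.rootMultiplicity_X_sub_C_self,
      Polynomial.rootMultiplicity_eq_zero]
    · simpa [Polynomial.IsRoot, Polynomial.eval_prod] using hposlast.ne'
    · rw [← hν0, hIco]
      exact P.charpoly_monic.ne_zero
  · have h := congrFun (hprod j hj) x
    rw [hμinit] at h
    refine nonneg_of_mul_nonneg_right ?_ (hpos j hj)
    rw [← smul_eq_mul, ← Pi.smul_apply, ← h]
    rw [Matrix.vecMul, dotProduct]
    exact Finset.sum_nonneg fun y _ => mul_nonneg (hμ0 y) (hν.nonneg _ y x)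
end

section
/- Under the setup of the previous statement (reversible P with nonnegative eigenvalues, probability measures μ_j satisfying μ_j P = β_j μ_j + (1-β_j)μ_{j+1}, μ_1 = μ, μ_N = π, and Q the pure birth chain), for every t ≥ 0 and every probability distribution μ, μP^t = Σ_{j=1}^{N} Q^t(1,j) μ_j; consequently μP^t ≥ Q^t(1,N)·π componentwise. -/
open Polynomial in
/-- Synthetic division by `X - a`, as a linear map. -/
noncomputable def divLinear (a : ℝ) : ℝ[X] →ₗ[ℝ] ℝ[X] where
  toFun f := f /ₘ (X - C a)
  map_add' f g := by
    refine (div_modByMonic_unique _ (C (eval a f + eval a g)) (monic_X_sub_C a) ⟨?_, ?_⟩).1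
    · have hf := modByMonic_add_div f (X - C a)
      have hg := modByMonic_add_div g (X - C a)
      rw [modByMonic_X_sub_C_eq_C_eval] at hf hg
      rw [C_add]
      linear_combination hf + hg
    · rw [degree_X_sub_C]
      exact degree_C_lt
  map_smul' c f := by
    refine (div_modByMonic_unique _ (C (c * eval a f)) (monic_X_sub_C a) ⟨?_, ?_⟩).1
    · have hf := modByMonic_add_div f (X - C a)
      rw [modByMonic_X_sub_C_eq_C_eval] at hf
      rw [RingHom.id_apply, smul_eq_C_mul, smul_eq_C_mul, C_mul]
      linear_combination C c * hf
    · rw [degree_X_sub_C]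
      exact degree_C_lt

open Polynomial in
/-- The divided difference of a polynomial over a list of nodes. -/
noncomputable def dividedDiff : List ℝ → ℝ[X] →ₗ[ℝ] ℝ
  | [] => 0
  | [a] => leval a
  | a :: b :: L => (dividedDiff (b :: L)).comp (divLinear a)

section dividedDiff

open Polynomial

theorem divLinear_mul (a : ℝ) (f : ℝ[X]) : divLinear a ((X - C a) * f) = f :=
  mul_divByMonic_cancel_left f (monic_X_sub_C a)

theorem divLinear_C (a c : ℝ) : divLinear a (C c) = 0 := by
  refine (divByMonic_eq_zero_iff (monic_X_sub_C a)).2 ?_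
  rw [degree_X_sub_C]
  exact degree_C_lt

theorem dividedDiff_cons_mul_self (a : ℝ) (L : List ℝ) (f : ℝ[X]) :
    dividedDiff (a :: L) ((X - C a) * f) = dividedDiff L f := by
  cases L with
  | nil => simp [dividedDiff, leval]
  | cons b L => simp [dividedDiff, divLinear_mul]

theorem dividedDiff_cons_mul (a b : ℝ) (L : List ℝ) (f : ℝ[X]) :
    dividedDiff (a :: L) ((X - C b) * f)
      = dividedDiff L f + (a - b) * dividedDiff (a :: L) f := by
  have h : (X - C b) * f = (X - C a) * f + (a - b) • f := by
    rw [smul_eq_C_mul, C_sub]; ring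
  rw [h, map_add, map_smul, dividedDiff_cons_mul_self, smul_eq_mul]

theorem dividedDiff_cons_cons_C (a b : ℝ) (L : List ℝ) (c : ℝ) :
    dividedDiff (a :: b :: L) (C c) = 0 := by
  simp [dividedDiff, divLinear_C]

theorem dividedDiff_C_nonneg (L : List ℝ) {c : ℝ} (hc : 0 ≤ c) :
    0 ≤ dividedDiff L (C c) := by
  match L with
  | [] => simp [dividedDiff]
  | [a] => simpa [dividedDiff, leval] using hc
  | a :: b :: L => rw [dividedDiff_cons_cons_C]

/-- Positivity of divided differences for polynomials built by a Newton recursion whose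
nodes are dominated by those of the divided difference. -/
theorem dividedDiff_newton_nonneg (F : List ℝ → ℝ[X]) (c : List ℝ → ℝ) (c₀ : ℝ)
    (hF₀ : F [] = C c₀) (hc₀ : 0 ≤ c₀)
    (hF : ∀ b M, F (b :: M) = (X - C b) * F M + C (c M)) :
    ∀ M K : List ℝ, (∀ M', M' <:+ M → 0 ≤ c M') → M.Pairwise (· ≥ ·) →
      (∀ (q : ℕ) (a b : ℝ), K[q]? = some a → M[q]? = some b → b ≤ a) →
      0 ≤ dividedDiff K (F M) := by
  intro M
  induction M with
  | nil => intro K _ _ _; rw [hF₀]; exact dividedDiff_C_nonneg K hc₀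
  | cons b M ih =>
    intro K hc hM hdom
    have hcM : ∀ M', M' <:+ M → 0 ≤ c M' := fun M' h =>
      hc M' (h.trans (List.suffix_cons b M))
    have hM' := (List.pairwise_cons.1 hM).2
    cases K with
    | nil => simp [dividedDiff]
    | cons a K =>
      rw [hF, map_add, dividedDiff_cons_mul]
      have hab : b ≤ a := hdom 0 a b rfl rfl
      have h1 : 0 ≤ dividedDiff K (F M) :=
        ih K hcM hM' fun q a' b' ha hb => hdom (q + 1) a' b' (by simpa using ha) (by simpa using hb)
      have h2 : 0 ≤ dividedDiff (a :: K) (F M) := by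
        refine ih (a :: K) hcM hM' fun q a' b' ha hb => ?_
        obtain ⟨hq, hb⟩ := List.getElem?_eq_some_iff.1 hb
        have hq' : q < (b :: M).length := by simp; omega
        refine le_trans ?_ (hdom q a' (b :: M)[q] ha (List.getElem?_eq_getElem hq'))
        rw [← hb]
        have := List.pairwise_iff_getElem.1 hM q (q + 1) hq' (by simpa using hq) (by omega)
        simpa using this
      have h3 := dividedDiff_C_nonneg (a :: K) (hc M (List.suffix_cons b M))
      have h4 := mul_nonneg (sub_nonneg.2 hab) h2
      linarith

end dividedDiff

section newton

open Polynomial Matrix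

variable {n : Type*} [Fintype n] [DecidableEq n]

/-- The product of the linear factors `X - a`, for `a` in a list. -/
noncomputable def linearProd (L : List ℝ) : ℝ[X] := (L.map fun a => X - C a).prod

theorem linearProd_cons (a : ℝ) (L : List ℝ) :
    linearProd (a :: L) = (X - C a) * linearProd L := by
  simp [linearProd]

/-- The Newton expansion of `(∏ (X - a) - ∏ (S - a)) / (X - S)`, for `a` in a list. -/
noncomputable def newtonAdj (S : Matrix n n ℝ) : List ℝ → Matrix n n ℝ[X]
  | [] => 0
  | a :: L => (X - C a) • newtonAdj S L + (aeval S (linearProd L)).map C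

theorem charmatrix_mul_newtonAdj (S : Matrix n n ℝ) (L : List ℝ) :
    charmatrix S * newtonAdj S L
      = linearProd L • (1 : Matrix n n ℝ[X]) - (aeval S (linearProd L)).map C := by
  induction L with
  | nil => simp [newtonAdj, linearProd]
  | cons a L ih =>
    have hS : charmatrix S = (X : ℝ[X]) • (1 : Matrix n n ℝ[X]) - S.map C := by
      rw [charmatrix, Matrix.smul_one_eq_diagonal]; rfl
    have h2 : (aeval S (linearProd (a :: L))).map C
        = (S.map C) * (aeval S (linearProd L)).map C
          - (C a) • (aeval S (linearProd L)).map C := by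
      rw [linearProd_cons, map_mul, map_sub, aeval_X, aeval_C, sub_mul,
        Matrix.map_sub _ (fun x y => C_sub), Matrix.map_mul]
      congr 1
      ext i j : 2
      simp [Algebra.algebraMap_eq_smul_one]
    rw [newtonAdj, mul_add, mul_smul_comm, ih, h2, hS, linearProd_cons, sub_mul, smul_one_mul]
    module

theorem newtonAdj_eq_adjugate (S : Matrix n n ℝ) (L : List ℝ)
    (h : S.charpoly = linearProd L) : newtonAdj S L = adjugate (charmatrix S) := by
  have h1 := charmatrix_mul_newtonAdj S L
  rw [← h, aeval_self_charpoly] at h1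
  have h2 := congrArg (fun M => adjugate (charmatrix S) * M) h1
  simp only [← mul_assoc, adjugate_mul] at h2
  have hne : S.charpoly ≠ 0 := (charpoly_monic S).ne_zero
  have h3 : S.charpoly • newtonAdj S L = S.charpoly • adjugate (charmatrix S) := by
    simpa [Matrix.charpoly] using h2
  exact smul_right_injective _ hne h3

theorem dividedDiff_newtonAdj (S : Matrix n n ℝ) (R : List ℝ) (i j : n) :
    ∀ (K : List ℝ) (a : ℝ),
      dividedDiff (a :: K) (newtonAdj S (a :: K ++ R) i j) = aeval S (linearProd R) i j := by
  intro K
  induction K with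
  | nil =>
    intro a
    have : newtonAdj S (a :: R) i j
      = (X - C a) * newtonAdj S R i j + C (aeval S (linearProd R) i j) := rfl
    simp [this, dividedDiff, leval]
  | cons b K ih =>
    intro a
    have : newtonAdj S (a :: b :: K ++ R) i j
      = (X - C a) * newtonAdj S (b :: K ++ R) i j
        + C (aeval S (linearProd (b :: K ++ R)) i j) := rfl
    rw [this, map_add, dividedDiff_cons_mul_self, dividedDiff_cons_cons_C, ih, add_zero]

end newton

section minors

open Polynomial Matrix

theorem charmatrix_submatrix_succAbove {n : ℕ} (S : Matrix (Fin (n + 1)) (Fin (n + 1)) ℝ)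
    (i : Fin (n + 1)) :
    (charmatrix S).submatrix i.succAbove i.succAbove
      = charmatrix (S.submatrix i.succAbove i.succAbove) := by
  ext k l : 2
  by_cases h : k = l
  · subst h; simp
  · rw [submatrix_apply, charmatrix_apply_ne _ _ _ h, charmatrix_apply_ne]
    · rfl
    · simpa using h

theorem adjugate_charmatrix_diag {n : ℕ} (S : Matrix (Fin (n + 1)) (Fin (n + 1)) ℝ)
    (i : Fin (n + 1)) :
    adjugate (charmatrix S) i i = (S.submatrix i.succAbove i.succAbove).charpoly := by
  rw [adjugate_fin_succ_eq_det_submatrix, charmatrix_submatrix_succAbove, Even.neg_one_pow ⟨_, rfl⟩,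
    one_mul, Matrix.charpoly]

theorem adjugate_charmatrix_offdiag {n : ℕ} (S : Matrix (Fin (n + 1)) (Fin (n + 1)) ℝ)
    (i : Fin (n + 1)) (l : Fin n) :
    adjugate (charmatrix S) (i.succAbove l) i
      = ∑ k, S (i.succAbove k) i •
          adjugate (charmatrix (S.submatrix i.succAbove i.succAbove)) l k := by
  set B := S.submatrix i.succAbove i.succAbove with hB
  set v : Fin n → ℝ[X] := fun l => adjugate (charmatrix S) (i.succAbove l) i with hv
  set s : Fin n → ℝ[X] := fun k => C (S (i.succAbove k) i) with hs
  have h1 : charmatrix B *ᵥ v = B.charpoly • s := by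
    ext k : 1
    have h := congrFun₂ (mul_adjugate (charmatrix S)) (i.succAbove k) i
    rw [Matrix.mul_apply, Fin.sum_univ_succAbove _ i, adjugate_charmatrix_diag,
      charmatrix_apply_ne _ _ _ (Fin.succAbove_ne i k)] at h
    simp only [Matrix.smul_apply, Matrix.one_apply_ne (Fin.succAbove_ne i k), smul_zero] at h
    rw [← charmatrix_submatrix_succAbove]
    simp only [mulVec, dotProduct, submatrix_apply, Pi.smul_apply, smul_eq_mul, hv, hs]
    linear_combination h
  have h2 := congrArg (fun w => adjugate (charmatrix B) *ᵥ w) h1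
  simp only [mulVec_mulVec, adjugate_mul, mulVec_smul, smul_mulVec, one_mulVec] at h2
  have hne : B.charpoly ≠ 0 := (charpoly_monic B).ne_zero
  have h3 := smul_right_injective _ hne h2
  have h4 := congrFun h3 l
  simp only [mulVec, dotProduct, hv, hs] at h4
  rw [h4]
  exact Finset.sum_congr rfl fun k _ => by rw [smul_eq_C_mul, mul_comm]

end minors

section interlacing

open Polynomial Matrix

theorem roots_linearProd (L : List ℝ) : (linearProd L).roots = (L : Multiset ℝ) := by
  have := roots_multiset_prod_X_sub_C (L : Multiset ℝ)
  simpa [linearProd] using this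

theorem Matrix.IsHermitian.exists_diagonalization {n : Type*} [Fintype n] [DecidableEq n]
    {S : Matrix n n ℝ} (hS : S.IsHermitian) :
    ∃ u : Fin (Fintype.card n) → n → ℝ,
      (∀ x : n → ℝ, x ⬝ᵥ x = ∑ k, (u k ⬝ᵥ x) ^ 2) ∧
      ∀ x : n → ℝ, x ⬝ᵥ S *ᵥ x = ∑ k, hS.eigenvalues₀ k * (u k ⬝ᵥ x) ^ 2 := by
  set e := Fintype.equivOfCardEq (Fintype.card_fin (Fintype.card n)) with he
  have key : ∀ x y : n → ℝ, x ⬝ᵥ y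
      = ∑ j, (⇑(hS.eigenvectorBasis j) ⬝ᵥ x) * (⇑(hS.eigenvectorBasis j) ⬝ᵥ y) := by
    intro x y
    have := hS.eigenvectorBasis.sum_inner_mul_inner (WithLp.toLp 2 x) (WithLp.toLp 2 y)
    simp only [EuclideanSpace.inner_eq_star_dotProduct, star_trivial] at this
    rw [dotProduct_comm, ← this]
    exact Finset.sum_congr rfl fun j _ => by rw [dotProduct_comm y]
  refine ⟨fun k => ⇑(hS.eigenvectorBasis (e k)), fun x => ?_, fun x => ?_⟩
  · rw [key x x, ← e.sum_comp]
    exact Finset.sum_congr rfl fun k _ => (sq _).symm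
  · rw [key, ← e.sum_comp]
    refine Finset.sum_congr rfl fun k _ => ?_
    have hT : Sᵀ = S := by simpa [conjTranspose_eq_transpose_of_trivial] using hS.eq
    rw [dotProduct_mulVec, ← mulVec_transpose, hT, hS.mulVec_eigenvectorBasis, smul_dotProduct,
      Matrix.IsHermitian.eigenvalues, Equiv.symm_apply_apply, smul_eq_mul]
    ring

/-- One half of the Cauchy interlacing inequalities. -/
theorem Matrix.IsHermitian.eigenvalues₀_submatrix_le {n : ℕ}
    {S : Matrix (Fin (n + 1)) (Fin (n + 1)) ℝ} (hS : S.IsHermitian) (i : Fin (n + 1))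
    (hB : (S.submatrix i.succAbove i.succAbove).IsHermitian) (q : ℕ)
    (hq : q < Fintype.card (Fin n)) (hq' : q < Fintype.card (Fin (n + 1))) :
    hB.eigenvalues₀ ⟨q, hq⟩ ≤ hS.eigenvalues₀ ⟨q, hq'⟩ := by
  obtain ⟨u, hu, huS⟩ := hS.exists_diagonalization
  obtain ⟨v, hv, hvB⟩ := hB.exists_diagonalization
  set W : Matrix (Fin (Fintype.card (Fin n))) (Fin n) ℝ := fun k =>
    if (k : ℕ) < q then fun l => u ⟨k, k.2.trans (by simp)⟩ (i.succAbove l)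
    else if (k : ℕ) = q then 0 else v k with hW
  have hsurj : ¬ Function.Surjective W.mulVecLin := by
    intro h
    obtain ⟨y, hy⟩ := h (fun _ => 1)
    have h1 : W ⟨q, hq⟩ ⬝ᵥ y = 1 := congrFun hy ⟨q, hq⟩
    have h0 : W ⟨q, hq⟩ = 0 := by simp [hW]
    simp [h0] at h1
  rw [← LinearMap.injective_iff_surjective_of_finrank_eq_finrank (by simp),
    ← LinearMap.ker_eq_bot, LinearMap.ker_eq_bot'] at hsurj
  push Not at hsurj
  obtain ⟨y, hy, hy0⟩ := hsurj
  set x : Fin (n + 1) → ℝ := i.insertNth 0 y with hx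
  have hdot : ∀ z : Fin (n + 1) → ℝ, z ⬝ᵥ x = (fun l => z (i.succAbove l)) ⬝ᵥ y := by
    intro z
    simp [dotProduct, Fin.sum_univ_succAbove _ i, hx]
  have hxx : x ⬝ᵥ x = y ⬝ᵥ y := by
    rw [hdot]; simp [hx]
  have hxS : x ⬝ᵥ S *ᵥ x = y ⬝ᵥ S.submatrix i.succAbove i.succAbove *ᵥ y := by
    rw [dotProduct_comm, hdot, dotProduct_comm]
    congr 1
    ext l
    exact hdot _
  have hpos : 0 < y ⬝ᵥ y := by
    refine lt_of_le_of_ne ?_ fun h => hy0 (dotProduct_self_eq_zero.1 h.symm)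
    exact Finset.sum_nonneg fun l _ => mul_self_nonneg _
  have h1 : hB.eigenvalues₀ ⟨q, hq⟩ * (y ⬝ᵥ y)
      ≤ y ⬝ᵥ S.submatrix i.succAbove i.succAbove *ᵥ y := by
    rw [hvB, hv y, Finset.mul_sum]
    refine Finset.sum_le_sum fun k _ => ?_
    rcases le_or_gt (k : ℕ) q with hk | hk
    · exact mul_le_mul_of_nonneg_right (hB.eigenvalues₀_antitone hk) (sq_nonneg _)
    · have h0 : W k ⬝ᵥ y = 0 := congrFun hy k
      have hWk : W k = v k := by simp [hW, not_lt.2 hk.le, hk.ne']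
      simp [← hWk, h0]
  have h2 : x ⬝ᵥ S *ᵥ x ≤ hS.eigenvalues₀ ⟨q, hq'⟩ * (x ⬝ᵥ x) := by
    rw [huS, hu x, Finset.mul_sum]
    refine Finset.sum_le_sum fun k _ => ?_
    rcases le_or_gt q (k : ℕ) with hk | hk
    · exact mul_le_mul_of_nonneg_right (hS.eigenvalues₀_antitone hk) (sq_nonneg _)
    · have h0 : W ⟨k, hk.trans hq⟩ ⬝ᵥ y = 0 := congrFun hy ⟨k, hk.trans hq⟩
      have hWk : W ⟨k, hk.trans hq⟩ = fun l => u k (i.succAbove l) := by simp [hW, hk]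
      simp [hdot, ← hWk, h0]
  rw [hxS, hxx] at h2
  exact le_of_mul_le_mul_right (h1.trans h2) hpos

end interlacing

section micchelliWilloughby

open Polynomial Matrix

theorem linearProd_ofFn {n : ℕ} (f : Fin n → ℝ) :
    linearProd (List.ofFn f) = ∏ k, (X - C (f k)) := by
  rw [linearProd, List.map_ofFn, List.prod_ofFn]
  rfl

theorem Matrix.IsHermitian.charpoly_eq_linearProd {n : Type*} [Fintype n] [DecidableEq n]
    {S : Matrix n n ℝ} (hS : S.IsHermitian) :
    S.charpoly = linearProd (List.ofFn hS.eigenvalues₀) := by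
  rw [linearProd_ofFn, hS.charpoly_eq]
  exact (Equiv.prod_comp (Fintype.equivOfCardEq (Fintype.card_fin (Fintype.card n))).symm
    fun k => X - C (hS.eigenvalues₀ k))

/-- The Micchelli–Willoughby theorem: for a symmetric nonnegative matrix, the partial products
of `S - a` over the eigenvalues `a` in increasing order have nonnegative entries. -/
theorem Matrix.IsHermitian.aeval_linearProd_nonneg {n : ℕ} {S : Matrix (Fin n) (Fin n) ℝ}
    (hS : S.IsHermitian) (hS0 : ∀ i j, 0 ≤ S i j) (R : List ℝ)
    (hR : R <:+ List.ofFn hS.eigenvalues₀) (i j : Fin n) :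
    0 ≤ aeval S (linearProd R) i j := by
  induction n generalizing R with
  | zero => exact i.elim0
  | succ n ih =>
    obtain ⟨K, hK⟩ := hR
    cases K with
    | nil =>
      rw [show R = List.ofFn hS.eigenvalues₀ from hK, ← hS.charpoly_eq_linearProd,
        aeval_self_charpoly]
      rfl
    | cons a K =>
      rw [← dividedDiff_newtonAdj S R i j K a, hK,
        newtonAdj_eq_adjugate S _ hS.charpoly_eq_linearProd]
      have hB : (S.submatrix j.succAbove j.succAbove).IsHermitian := hS.submatrix _
      have hsort : (List.ofFn hB.eigenvalues₀).Pairwise (· ≥ ·) :=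
        List.sortedGE_iff_pairwise.1 hB.eigenvalues₀_antitone.sortedGE_ofFn
      have hdom : ∀ (q : ℕ) (c b : ℝ), (a :: K)[q]? = some c →
          (List.ofFn hB.eigenvalues₀)[q]? = some b → b ≤ c := by
        intro q c b hc hb
        have hc' : (List.ofFn hS.eigenvalues₀)[q]? = some c := by
          rw [← hK, List.getElem?_append_left (List.getElem?_eq_some_iff.1 hc).1, hc]
        obtain ⟨hq', rfl⟩ := List.getElem?_eq_some_iff.1 hc'
        obtain ⟨hq, rfl⟩ := List.getElem?_eq_some_iff.1 hb
        simp only [List.getElem_ofFn]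
        exact hS.eigenvalues₀_submatrix_le j hB q _ _
      rcases Fin.eq_self_or_eq_succAbove j i with rfl | ⟨l, rfl⟩
      · rw [adjugate_charmatrix_diag, hB.charpoly_eq_linearProd]
        exact dividedDiff_newton_nonneg linearProd (fun _ => 0) 1 (by simp [linearProd])
          zero_le_one (fun b M => by simp [linearProd_cons]) _ _ (fun _ _ => le_rfl) hsort hdom
      · rw [adjugate_charmatrix_offdiag, map_sum]
        refine Finset.sum_nonneg fun k _ => ?_
        rw [map_smul, smul_eq_mul]
        refine mul_nonneg (hS0 _ _) ?_
        rw [← newtonAdj_eq_adjugate _ _ hB.charpoly_eq_linearProd]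
        exact dividedDiff_newton_nonneg (fun M => newtonAdj _ M l k)
          (fun M => aeval (S.submatrix j.succAbove j.succAbove) (linearProd M) l k) 0
          (by simp [newtonAdj]) le_rfl (fun b M => rfl) _ _
          (fun M' hM' => ih hB (fun _ _ => hS0 _ _) M' hM' l k) hsort hdom

end micchelliWilloughby

section reversible

open Polynomial Matrix

theorem aeval_mul_of_semiconj {n : Type*} [Fintype n] [DecidableEq n] {D M S : Matrix n n ℝ}
    (h : D * M = S * D) (f : ℝ[X]) : D * aeval M f = aeval S f * D := by
  induction f using Polynomial.induction_on' with
  | add f g hf hg => rw [map_add, map_add, mul_add, add_mul, hf, hg]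
  | monomial k c =>
    have hk : D * M ^ k = S ^ k * D := SemiconjBy.pow_right (a := D) h k
    simp only [aeval_monomial, Algebra.algebraMap_eq_smul_one, mul_smul_comm, smul_mul_assoc,
      one_mul, hk]

theorem linearProd_reverse (L : List ℝ) : linearProd L.reverse = linearProd L :=
  ((List.reverse_perm L).map _).prod_eq

theorem mem_Icc_of_isRoot_charpoly {n : Type*} [Fintype n] [DecidableEq n]
    {M : Matrix n n ℝ} (hM0 : ∀ i j, 0 ≤ M i j) (hM1 : ∀ i, ∑ j, M i j = 1) {a : ℝ}
    (ha : M.charpoly.IsRoot a) : a ∈ Set.Icc (-1 : ℝ) 1 := by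
  have hev : Module.End.HasEigenvalue (Matrix.toLin' M) a := by
    rw [Module.End.hasEigenvalue_iff_isRoot_charpoly]
    simpa using ha
  obtain ⟨k, hk⟩ := eigenvalue_mem_ball hev
  have hs : ∑ j ∈ Finset.univ.erase k, ‖M k j‖ = 1 - M k k := by
    rw [← hM1 k, ← Finset.add_sum_erase _ _ (Finset.mem_univ k), add_sub_cancel_left]
    exact Finset.sum_congr rfl fun j _ => Real.norm_of_nonneg (hM0 k j)
  rw [hs, Metric.mem_closedBall, Real.dist_eq, abs_le] at hk
  have := hM0 k k
  constructor <;> linarith [hk.1, hk.2]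

theorem exists_eigenvalues_of_reversible {N : ℕ} {M : Matrix (Fin N) (Fin N) ℝ}
    (hM0 : ∀ i j, 0 ≤ M i j) (hM1 : ∀ i, ∑ j, M i j = 1) {p : Fin N → ℝ} (hp : ∀ i, 0 < p i)
    (hrev : ∀ i j, p i * M i j = p j * M j i) :
    ∃ b : Fin N → ℝ, b ∈ Set.Icc (fun _ => -1) (fun _ => 1) ∧ Monotone b ∧
      M.charpoly = linearProd (List.ofFn b) ∧
      ∀ R, R <+: List.ofFn b → ∀ i j, 0 ≤ aeval M (linearProd R) i j := by
  set r : Fin N → ℝ := fun i => √(p i) with hr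
  have hr0 : ∀ i, 0 < r i := fun i => Real.sqrt_pos.2 (hp i)
  have hrr : ∀ i, r i * r i = p i := fun i => Real.mul_self_sqrt (hp i).le
  set S : Matrix (Fin N) (Fin N) ℝ := fun i j => r i * M i j * (r j)⁻¹ with hSdef
  have hS0 : ∀ i j, 0 ≤ S i j := fun i j =>
    mul_nonneg (mul_nonneg (hr0 i).le (hM0 i j)) (inv_nonneg.2 (hr0 j).le)
  have hS : S.IsHermitian := by
    ext i j
    rw [conjTranspose_apply, star_trivial]
    simp only [hSdef]
    have h1 := (hr0 i).ne'
    have h2 := (hr0 j).ne'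
    have := hrev i j
    rw [← hrr, ← hrr] at this
    field_simp
    linarith
  have hsemi : diagonal r * M = S * diagonal r := by
    ext i j
    rw [diagonal_mul, mul_diagonal, hSdef]
    have := (hr0 j).ne'
    field_simp
  have hchar : M.charpoly = S.charpoly := by
    have hu : diagonal r * diagonal (fun i => (r i)⁻¹) = 1 := by
      simp [diagonal_mul_diagonal, fun i => mul_inv_cancel₀ (hr0 i).ne']
    have hu' : diagonal (fun i => (r i)⁻¹) * diagonal r = 1 := by
      simp [diagonal_mul_diagonal, fun i => inv_mul_cancel₀ (hr0 i).ne']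
    have hSM : S = diagonal r * M * diagonal (fun i => (r i)⁻¹) := by
      rw [hsemi, mul_assoc, hu, mul_one]
    rw [hSM, charpoly_mul_comm, ← mul_assoc, hu', one_mul]
  set L := (List.ofFn hS.eigenvalues₀).reverse with hL
  have hlen : L.length = N := by simp [hL]
  have hb : List.ofFn (fun k : Fin N => L.get (k.cast hlen.symm)) = L := by
    apply List.ext_get
    · simp [hlen]
    · intro k h1 h2; simp
  have hML : M.charpoly = linearProd L := by
    rw [hchar, hL, linearProd_reverse, hS.charpoly_eq_linearProd]
  have hbd : ∀ a ∈ L, a ∈ Set.Icc (-1 : ℝ) 1 := by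
    intro a ha
    refine mem_Icc_of_isRoot_charpoly hM0 hM1 ?_
    refine isRoot_of_mem_roots ?_
    rw [hML, roots_linearProd]
    exact ha
  have hsort : L.Pairwise (· ≤ ·) := by
    rw [hL, List.pairwise_reverse]
    exact List.sortedGE_iff_pairwise.1 hS.eigenvalues₀_antitone.sortedGE_ofFn
  refine ⟨fun k : Fin N => L.get (k.cast hlen.symm), ?_, ?_, ?_, ?_⟩
  · exact ⟨fun k => (hbd _ (List.get_mem _ _)).1, fun k => (hbd _ (List.get_mem _ _)).2⟩
  · intro k l hkl
    rcases hkl.eq_or_lt with rfl | hkl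
    · exact le_rfl
    · exact List.pairwise_iff_get.1 hsort _ _ hkl
  · rw [hb, hML]
  · intro R hR i j
    rw [hb, hL] at hR
    have h1 : R.reverse <:+ List.ofFn hS.eigenvalues₀ := by
      rw [← List.reverse_prefix, List.reverse_reverse]; exact hR
    have h2 := hS.aeval_linearProd_nonneg hS0 _ h1 i j
    rw [linearProd_reverse] at h2
    have h3 := congrFun₂ (aeval_mul_of_semiconj hsemi (linearProd R)) i j
    rw [diagonal_mul, mul_diagonal] at h3
    refine nonneg_of_mul_nonneg_right (a := r i) ?_ (hr0 i)
    rw [h3]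
    exact mul_nonneg h2 (hr0 j).le

theorem aeval_linearProd {n : Type*} [Fintype n] [DecidableEq n] (M : Matrix n n ℝ)
    (L : List ℝ) : aeval M (linearProd L) = (L.map fun a => M - a • (1 : Matrix n n ℝ)).prod := by
  rw [linearProd, map_list_prod, List.map_map]
  congr 2
  ext1 a
  simp [Algebra.algebraMap_eq_smul_one]

theorem continuous_aeval_linearProd {N : ℕ} (m : ℕ) :
    Continuous fun q : (Fin N → ℝ) × Matrix (Fin N) (Fin N) ℝ =>
      aeval q.2 (linearProd ((List.ofFn q.1).take m)) := by
  have h : ∀ q : (Fin N → ℝ) × Matrix (Fin N) (Fin N) ℝ,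
      aeval q.2 (linearProd ((List.ofFn q.1).take m))
        = (((List.finRange N).take m).map fun k => q.2 - q.1 k • 1).prod := by
    intro q
    rw [aeval_linearProd, List.ofFn_eq_map, ← List.map_take, List.map_map]
    rfl
  simp_rw [h]
  exact continuous_list_prod _ fun k _ => by fun_prop

theorem ofFn_eq_of_linearProd_eq {N : ℕ} {b β : Fin N → ℝ} (hb : Monotone b) (hβ : Monotone β)
    (h : linearProd (List.ofFn b) = linearProd (List.ofFn β)) : b = β := by
  have hr := congrArg roots h
  rw [roots_linearProd, roots_linearProd, Multiset.coe_eq_coe] at hr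
  apply List.ofFn_injective
  exact hr.eq_of_pairwise' (List.sortedLE_iff_pairwise.1 hb.sortedLE_ofFn)
    (List.sortedLE_iff_pairwise.1 hβ.sortedLE_ofFn)

/-- Micchelli–Willoughby positivity for limits of reversible Markov matrices. -/
theorem aeval_linearProd_nonneg_of_mem_revClosure {N : ℕ} {P : Matrix (Fin N) (Fin N) ℝ}
    (hP : P ∈ RevClosure N) {β : Fin N → ℝ} (hβ : Monotone β)
    (hchar : P.charpoly = ∏ j, (X - C (β j))) (m : ℕ) (i j : Fin N) :
    0 ≤ aeval P (linearProd ((List.ofFn β).take m)) i j := by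
  let I : Set (Fin N → ℝ) := Set.Icc (fun _ => -1) (fun _ => 1)
  have : CompactSpace I := isCompact_iff_compactSpace.1 isCompact_Icc
  let Z : Set (I × Matrix (Fin N) (Fin N) ℝ) :=
    {q | Monotone (q.1 : Fin N → ℝ)} ∩
      ({q | ∀ z : ℝ, (scalar (Fin N) z - q.2).det = ∏ k, (z - (q.1 : Fin N → ℝ) k)} ∩
      {q | ∀ (m : ℕ) (i j : Fin N),
        0 ≤ aeval q.2 (linearProd ((List.ofFn (q.1 : Fin N → ℝ)).take m)) i j})
  have hZ : IsClosed Z := by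
    refine IsClosed.inter ?_ (IsClosed.inter ?_ ?_)
    · exact isClosed_monotone.preimage (continuous_subtype_val.comp continuous_fst)
    · simp only [Set.ofPred_forall]
      refine isClosed_iInter fun z => isClosed_eq ?_ ?_
      · exact (continuous_const.sub continuous_snd).matrix_det
      · refine continuous_finsetProd _ fun k _ => continuous_const.sub ?_
        exact (continuous_apply k).comp (continuous_subtype_val.comp continuous_fst)
    · simp only [Set.ofPred_forall]
      refine isClosed_iInter fun m => isClosed_iInter fun i => isClosed_iInter fun j => ?_
      refine isClosed_le continuous_const ?_
      have h1 := (continuous_aeval_linearProd (N := N) m).comp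
        (continuous_subtype_val.prodMap continuous_id :
          Continuous (Prod.map (Subtype.val : I → (Fin N → ℝ)) id))
      exact h1.matrix_elem i j
  have hcl := isClosedMap_snd_of_compactSpace Z hZ
  have hsub : P ∈ Prod.snd '' Z := by
    refine closure_minimal ?_ hcl hP
    rintro M ⟨hM0, hM1, p, hp, -, hrev⟩
    obtain ⟨b, hbI, hbm, hbc, hbn⟩ := exists_eigenvalues_of_reversible hM0 hM1 hp hrev
    refine ⟨(⟨b, hbI⟩, M), ⟨hbm, fun z => ?_, fun m => hbn _ (List.take_prefix _ _)⟩, rfl⟩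
    rw [← eval_charpoly, hbc, linearProd_ofFn, eval_prod]
    simp
  obtain ⟨⟨⟨b, hbI⟩, M⟩, ⟨hbm, hbz, hbn⟩, rfl⟩ := hsub
  have hb : b = β := by
    refine ofFn_eq_of_linearProd_eq hbm hβ ?_
    rw [linearProd_ofFn, linearProd_ofFn, ← hchar]
    refine Polynomial.funext fun z => ?_
    rw [eval_charpoly, hbz z, eval_prod]
    simp
  exact hb ▸ hbn m i j

end reversible

/-- Equation (2.2) of the paper: with `μ_j` the local equilibria and `Q` the pure
birth chain, `μ P^t = ∑_{j=1}^N Q^t(1,j) μ_j`, hence `μ P^t ≥ Q^t(1,N) π`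
componentwise.  (`μseq j` is the paper's `μ_{j+1}`, `β ⟨j⟩` is the paper's `β_{j+1}`.) -/
theorem local_equilibria_decomposition (N : ℕ) (hN : 2 ≤ N)
    (P : Matrix (Fin N) (Fin N) ℝ) (hPcl : P ∈ RevClosure N)
    (piv : Fin N → ℝ) (hpiv0 : ∀ i, 0 ≤ piv i) (hpiv1 : ∑ i, piv i = 1)
    (hstat : ∀ j, ∑ i, piv i * P i j = piv j)
    (hrev : ∀ i j, piv i * P i j = piv j * P j i)
    (β : Fin N → ℝ)
    (hchar : P.charpoly = ∏ j, (Polynomial.X - Polynomial.C (β j)))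
    (hmono : Monotone β) (hβ0 : ∀ j, 0 ≤ β j)
    (hβlt : ∀ j : Fin N, (j : ℕ) < N - 1 → β j < 1)
    (hβlast : ∀ j : Fin N, (j : ℕ) = N - 1 → β j = 1)
    (μ : Fin N → ℝ) (hμ0 : ∀ x, 0 ≤ μ x) (hμ1 : ∑ x, μ x = 1)
    (μseq : ℕ → Fin N → ℝ) (hμinit : μseq 0 = μ)
    (hrec : ∀ j, ∀ h : j < N - 1, ∀ y,
      ∑ x, μseq j x * P x y
        = β ⟨j, by omega⟩ * μseq j y + (1 - β ⟨j, by omega⟩) * μseq (j + 1) y)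
    (hμN : μseq (N - 1) = piv)
    (Q : Matrix (Fin N) (Fin N) ℝ)
    (hQ : ∀ i j : Fin N, Q i j =
      if j = i then β i
      else if (j : ℕ) = (i : ℕ) + 1 then 1 - β i else 0)
    (t : ℕ) (x : Fin N) :
    (∑ y, μ y * (P ^ t) y x)
        = ∑ j : Fin N, (Q ^ t) ⟨0, by omega⟩ j * μseq (j : ℕ) x ∧
    (Q ^ t) ⟨0, by omega⟩ ⟨N - 1, by omega⟩ * piv x ≤ ∑ y, μ y * (P ^ t) y x := by
  have hstep : ∀ (k : Fin N) (y : Fin N),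
      ∑ j : Fin N, Q k j * μseq (j : ℕ) y = ∑ z, μseq (k : ℕ) z * P z y := by
    intro k y
    rcases lt_or_ge (k : ℕ) (N - 1) with hk | hk
    · rw [hrec k hk y, ← Finset.add_sum_erase _ _ (Finset.mem_univ k),
        Finset.sum_eq_single_of_mem (⟨k + 1, by omega⟩ : Fin N) (by simp [Fin.ext_iff])]
      · simp [hQ, Fin.ext_iff]
      · intro j hj hne
        have h1 : j ≠ k := Finset.ne_of_mem_erase hj
        have h2 : (j : ℕ) ≠ k + 1 := fun h => hne (Fin.ext h)
        simp [hQ, h1, h2]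
    · have hk' : (k : ℕ) = N - 1 := by omega
      rw [hk', hμN, hstat, Finset.sum_eq_single_of_mem k (Finset.mem_univ k)]
      · simp [hQ, hβlast k hk', hk', hμN]
      · intro j _ hne
        have h2 : (j : ℕ) ≠ k + 1 := by omega
        simp [hQ, hne, h2]
  have hdecomp : ∀ (t : ℕ) (x : Fin N), ∑ y, μ y * (P ^ t) y x
      = ∑ j : Fin N, (Q ^ t) ⟨0, by omega⟩ j * μseq (j : ℕ) x := by
    intro t
    induction t with
    | zero => intro x; simp [Matrix.one_apply, hμinit]
    | succ t ih =>
      intro x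
      simp only [pow_succ, Matrix.mul_apply, Finset.mul_sum, Finset.sum_mul]
      rw [Finset.sum_comm]
      simp only [← mul_assoc, ← Finset.sum_mul, ih]
      simp only [Finset.sum_mul]
      rw [Finset.sum_comm]
      conv_rhs => rw [Finset.sum_comm]
      refine Finset.sum_congr rfl fun k _ => ?_
      simp only [mul_assoc, ← Finset.mul_sum, hstep]
  have hQ0 : ∀ i j, 0 ≤ Q i j := by
    intro i j
    rw [hQ]
    split_ifs with h1 h2
    · exact hβ0 i
    · exact sub_nonneg.2 (hβlt i (by omega)).le
    · exact le_rfl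
  have hQt : ∀ (t : ℕ) (i j : Fin N), 0 ≤ (Q ^ t) i j := by
    intro t
    induction t with
    | zero => intro i j; rw [pow_zero, Matrix.one_apply]; split_ifs <;> norm_num
    | succ t ih =>
      intro i j
      rw [pow_succ, Matrix.mul_apply]
      exact Finset.sum_nonneg fun k _ => mul_nonneg (ih i k) (hQ0 k j)
  have hprod : ∀ j, j ≤ N - 1 → ∃ c : ℝ, 0 < c ∧ ∀ y, c * μseq j y
      = ∑ z, μ z * Polynomial.aeval P (linearProd ((List.ofFn β).take j)) z y := by
    intro j
    induction j with
    | zero => intro _; exact ⟨1, one_pos, fun y => by simp [linearProd, Matrix.one_apply, hμinit]⟩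
    | succ j ih =>
      intro hj
      obtain ⟨c, hc, h⟩ := ih (by omega)
      have hjN : j < N := by omega
      refine ⟨c * (1 - β ⟨j, hjN⟩), mul_pos hc (sub_pos.2 (hβlt _ (by simpa using hj))),
        fun y => ?_⟩
      have htake : linearProd ((List.ofFn β).take (j + 1))
          = linearProd ((List.ofFn β).take j) * (Polynomial.X - Polynomial.C (β ⟨j, hjN⟩)) := by
        rw [List.take_add_one, List.getElem?_eq_getElem (by simpa using hjN)]
        simp [linearProd]
      have h1 := hrec j (by omega) y
      rw [htake]
      simp only [map_mul, map_sub, Polynomial.aeval_X, Polynomial.aeval_C, mul_sub,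
        Matrix.sub_apply, Finset.sum_sub_distrib, Algebra.algebraMap_eq_smul_one, mul_smul_comm,
        mul_one, Matrix.smul_apply, smul_eq_mul]
      have h2 : ∑ z, μ z * (Polynomial.aeval P (linearProd ((List.ofFn β).take j)) * P) z y
          = c * ∑ w, μseq j w * P w y := by
        simp only [Matrix.mul_apply, Finset.mul_sum, ← mul_assoc, h, Finset.sum_mul]
        exact Finset.sum_comm
      have h3 : ∑ z, μ z * (β ⟨j, hjN⟩
          * Polynomial.aeval P (linearProd ((List.ofFn β).take j)) z y)
          = β ⟨j, hjN⟩ * (c * μseq j y) := by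
        rw [h, Finset.mul_sum]
        exact Finset.sum_congr rfl fun z _ => by ring
      rw [h2, h3, h1]
      ring
  have hμnn : ∀ (j : Fin N) (y : Fin N), 0 ≤ μseq (j : ℕ) y := by
    intro j y
    obtain ⟨c, hc, h⟩ := hprod j (by omega)
    refine nonneg_of_mul_nonneg_right (a := c) ?_ hc
    rw [h]
    exact Finset.sum_nonneg fun z _ => mul_nonneg (hμ0 z)
      (aeval_linearProd_nonneg_of_mem_revClosure hPcl hmono hchar _ _ _)
  refine ⟨hdecomp t x, ?_⟩
  rw [hdecomp t x]
  have := Finset.single_le_sum (f := fun j : Fin N => (Q ^ t) ⟨0, by omega⟩ j * μseq (j : ℕ) x)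
    (fun j _ => mul_nonneg (hQt t _ j) (hμnn j x))
    (Finset.mem_univ (⟨N - 1, by omega⟩ : Fin N))
  simpa [hμN] using this
end

section
/- Let P be a reversible Markov matrix (in the closure of reversible matrices with positive stationary distribution) on a state space of size N with eigenvalues 0 ≤ β_1 ≤ ··· ≤ β_{N-1} < β_N = 1 and stationary distribution π. Let τ_1,...,τ_{N-1} be independent geometric random variables with P(τ_j = t) = β_j^{t-1}(1-β_j). Then for any initial probability distribution μ and any t ≥ 0, the separation distance satisfies d_sep(μP^t, π) ≤ P(τ_1 + ··· + τ_{N-1} > t). -/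
namespace MicchelliWilloughby

open Polynomial Matrix

/-- The Newton basis polynomial with nodes `l 0, …, l (k - 1)`. -/
noncomputable def newton (l : ℕ → ℝ) (k : ℕ) : ℝ[X] :=
  ∏ i ∈ Finset.range k, (X - C (l i))

lemma newton_succ (l : ℕ → ℝ) (k : ℕ) :
    newton l (k + 1) = newton l k * (X - C (l k)) :=
  Finset.prod_range_succ _ _

lemma degree_newton (l : ℕ → ℝ) (k : ℕ) : (newton l k).degree = k := by
  simp [newton, degree_prod]

lemma newton_coeff_unique (l : ℕ → ℝ) (n : ℕ) (c d : ℕ → ℝ)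
    (h : ∑ k ∈ Finset.range n, C (c k) * newton l k =
      ∑ k ∈ Finset.range n, C (d k) * newton l k) :
    ∀ k < n, c k = d k := by
  intro k hk
  let S : Polynomial.Sequence ℝ := ⟨newton l, degree_newton l⟩
  have hl : LinearIndependent ℝ (newton l) := S.linearIndependent
  have := linearIndependent_iff'.mp hl (Finset.range n) (fun k => c k - d k)
    (by simp only [sub_smul, Finset.sum_sub_distrib, smul_eq_C_mul, h, sub_self])
    k (Finset.mem_range.mpr hk)
  exact sub_eq_zero.mp this

/-- Polynomials of degree less than `n` with nonnegative coefficients in the Newton basis. -/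
def InNewtonCone (l : ℕ → ℝ) (n : ℕ) (p : ℝ[X]) : Prop :=
  ∃ c : ℕ → ℝ, (∀ k, 0 ≤ c k) ∧ p = ∑ k ∈ Finset.range n, C (c k) * newton l k

namespace InNewtonCone

variable {l : ℕ → ℝ} {n : ℕ} {p q : ℝ[X]}

lemma zero : InNewtonCone l n 0 := ⟨0, by simp, by simp⟩

lemma add (hp : InNewtonCone l n p) (hq : InNewtonCone l n q) : InNewtonCone l n (p + q) := by
  obtain ⟨c, hc, rfl⟩ := hp
  obtain ⟨d, hd, rfl⟩ := hq
  exact ⟨c + d, fun k => add_nonneg (hc k) (hd k), by simp [add_mul, Finset.sum_add_distrib]⟩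

lemma C_mul (hp : InNewtonCone l n p) {a : ℝ} (ha : 0 ≤ a) : InNewtonCone l n (C a * p) := by
  obtain ⟨c, hc, rfl⟩ := hp
  exact ⟨fun k => a * c k, fun k => mul_nonneg ha (hc k),
    by simp [Finset.mul_sum, mul_assoc]⟩

lemma sum {ι : Type*} (s : Finset ι) (f : ι → ℝ[X]) (hf : ∀ i ∈ s, InNewtonCone l n (f i)) :
    InNewtonCone l n (∑ i ∈ s, f i) :=
  Finset.sum_induction f _ (fun _ _ => add) zero hf

lemma newton_mem {k : ℕ} (hk : k < n) : InNewtonCone l n (newton l k) :=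
  ⟨Pi.single k 1, fun j => by by_cases h : j = k <;> simp [h],
    by simp [Pi.single_apply, apply_ite C, ite_mul, hk]⟩

lemma mono {m : ℕ} (hmn : m ≤ n) (hp : InNewtonCone l m p) : InNewtonCone l n p := by
  obtain ⟨c, hc, rfl⟩ := hp
  exact sum _ _ fun k hk => (newton_mem ((Finset.mem_range.mp hk).trans_le hmn)).C_mul (hc k)

lemma newton_of_le {m' : ℕ → ℝ} (m : ℕ) (h : ∀ j < m, ∀ k ≤ j, m' j ≤ l k) :
    InNewtonCone l (m + 1) (newton m' m) := by
  induction m with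
  | zero => simpa [newton] using newton_mem (l := l) (n := 1) (k := 0) one_pos
  | succ m ih =>
    obtain ⟨c, hc, hp⟩ := ih fun j hj => h j (hj.trans (Nat.lt_succ_self m))
    rw [newton_succ, hp, Finset.sum_mul]
    refine sum _ _ fun k hk => ?_
    have hk := Finset.mem_range.mp hk
    have : C (c k) * newton l k * (X - C (m' m)) =
        C (c k) * (newton l (k + 1) + C (l k - m' m) * newton l k) := by
      rw [newton_succ, C_sub]; ring
    rw [this]
    refine C_mul (add (newton_mem (by omega)) (C_mul (newton_mem (by omega)) ?_)) (hc k)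
    exact sub_nonneg.mpr (h m (Nat.lt_succ_self m) k (by omega))

end InNewtonCone

lemma adjugate_apply_succAbove {R : Type*} [CommRing R] [IsDomain R] {n : ℕ}
    (M : Matrix (Fin (n + 1)) (Fin (n + 1)) R) (i : Fin (n + 1))
    (hM : M.det ≠ 0) (hB : (M.submatrix i.succAbove i.succAbove).det ≠ 0) (j : Fin n) :
    M.adjugate i (i.succAbove j) =
      -∑ k, M i (i.succAbove k) * (M.submatrix i.succAbove i.succAbove).adjugate k j := by
  set B := M.submatrix i.succAbove i.succAbove with hBdef
  have hii : M.adjugate i i = B.det := by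
    rw [adjugate_fin_succ_eq_det_submatrix, ← two_mul, pow_mul]
    simp [hBdef]
  let r : Fin (n + 1) → R := i.insertNth B.det
    (fun j => -∑ k, M i (i.succAbove k) * B.adjugate k j)
  have hr : ∃ f : R, r ᵥ* M = Pi.single i f := by
    refine ⟨(r ᵥ* M) i, ?_⟩
    ext c
    refine Fin.succAboveCases i (by simp) (fun c => ?_) c
    have h1 : ((fun k => M i (i.succAbove k)) ᵥ* (B.adjugate * B)) c =
        B.det * M i (i.succAbove c) := by
      rw [adjugate_mul]
      simp [vecMul, dotProduct, Matrix.one_apply, mul_comm]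
    rw [← vecMul_vecMul] at h1
    rw [Pi.single_eq_of_ne (Fin.succAbove_ne i c)]
    simp only [vecMul, dotProduct, Fin.sum_univ_succAbove _ i, r, Fin.insertNth_apply_same,
      Fin.insertNth_apply_succAbove, neg_mul, Finset.sum_neg_distrib] at h1 ⊢
    rw [← h1]
    simp [hBdef]
  obtain ⟨f, hf⟩ := hr
  have h2 : M.det • r = f • M.adjugate i := by
    have : (r ᵥ* M) ᵥ* M.adjugate = M.det • r := by
      rw [vecMul_vecMul, mul_adjugate, vecMul_smul, vecMul_one]
    rw [← this, hf, single_vecMul]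
    rfl
  have hfd : f = M.det := by
    have := congrFun h2 i
    simp only [Pi.smul_apply, smul_eq_mul, hii, r, Fin.insertNth_apply_same] at this
    exact (mul_right_cancel₀ hB this).symm
  have := congrFun h2 (i.succAbove j)
  simp only [Pi.smul_apply, smul_eq_mul, hfd, r, Fin.insertNth_apply_succAbove] at this
  exact (mul_left_cancel₀ hM this).symm

/-- An orthogonal diagonalization with eigenvalues in decreasing order. -/
def IsDiagonalization {n : ℕ} (A U : Matrix (Fin n) (Fin n) ℝ) (l : ℕ → ℝ) : Prop :=
  (∀ i j, i ≤ j → j < n → l j ≤ l i) ∧ Uᵀ * U = 1 ∧ A = U * diagonal (fun i : Fin n => l i) * Uᵀ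

lemma exists_isDiagonalization {n : ℕ} (A : Matrix (Fin n) (Fin n) ℝ) (hA : A.IsSymm) :
    ∃ U l, IsDiagonalization A U l := by
  have hH : A.IsHermitian := by
    rw [IsHermitian, conjTranspose_eq_transpose_of_trivial]; exact hA
  let σ := Tuple.sort fun i => -hH.eigenvalues i
  have hσ : Antitone (hH.eigenvalues ∘ σ) := fun i j hij => by
    have := Tuple.monotone_sort (fun i => -hH.eigenvalues i) hij
    simpa [σ] using this
  have hU := hH.eigenvectorUnitary.2
  set V : Matrix (Fin n) (Fin n) ℝ := hH.eigenvectorUnitary.1 with hV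
  have hspec : A = V * diagonal hH.eigenvalues * Vᵀ := by
    conv_lhs => rw [hH.spectral_theorem, Unitary.conjStarAlgAut_apply]
    simp [hV, star_eq_conjTranspose, conjTranspose_eq_transpose_of_trivial]
  have hVV : Vᵀ * V = 1 := by
    have := (Matrix.mem_unitaryGroup_iff'.mp hU)
    simpa [star_eq_conjTranspose, conjTranspose_eq_transpose_of_trivial] using this
  refine ⟨V.submatrix id σ, fun k => if h : k < n then hH.eigenvalues (σ ⟨k, h⟩) else 0,
    fun i j hij hj => ?_, ?_, ?_⟩
  · simpa [hj, hij.trans_lt hj] using hσ (show (⟨i, hij.trans_lt hj⟩ : Fin n) ≤ ⟨j, hj⟩ from hij)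
  · rw [transpose_submatrix, submatrix_mul _ _ _ _ _ Function.bijective_id |>.symm, hVV]
    simp
  · have : diagonal (fun i : Fin n => if h : (i : ℕ) < n then hH.eigenvalues (σ ⟨i, h⟩) else 0) =
        (diagonal hH.eigenvalues).submatrix σ σ := by
      ext i j
      simp [diagonal_apply]
    rw [this, transpose_submatrix, submatrix_mul_equiv, submatrix_mul_equiv, ← hspec]
    simp

lemma charpoly_of_isDiagonalization {n : ℕ} {A U : Matrix (Fin n) (Fin n) ℝ} {l : ℕ → ℝ}
    (h : IsDiagonalization A U l) : A.charpoly = newton l n := by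
  rw [h.2.2, charpoly_mul_comm, ← mul_assoc, h.2.1, one_mul, charpoly_diagonal, newton,
    Finset.prod_range]

/-- One half of the Cauchy interlacing inequalities. -/
lemma interlacing {n : ℕ} {A U : Matrix (Fin (n + 1)) (Fin (n + 1)) ℝ} {l : ℕ → ℝ}
    (hA : IsDiagonalization A U l) (i : Fin (n + 1)) {W : Matrix (Fin n) (Fin n) ℝ} {m : ℕ → ℝ}
    (hB : IsDiagonalization (A.submatrix i.succAbove i.succAbove) W m) (k : ℕ) (hk : k < n) :
    m k ≤ l k := by
  let E : (Fin n → ℝ) →ₗ[ℝ] (Fin (n + 1) → ℝ) :=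
    { toFun := fun w => i.insertNth (0 : ℝ) w
      map_add' := fun v w => by
        ext c; refine Fin.succAboveCases i ?_ (fun c => ?_) c <;> simp
      map_smul' := fun a w => by
        ext c; refine Fin.succAboveCases i ?_ (fun c => ?_) c <;> simp }
  have hE0 : ∀ w, E w i = 0 := fun w => by simp [E]
  have hE1 : ∀ w c, E w (i.succAbove c) = w c := fun w => by simp [E]
  let F : (Fin n → ℝ) →ₗ[ℝ] (Fin n → ℝ) :=
    { toFun := fun b j => if (j : ℕ) < k then (Uᵀ *ᵥ E (W *ᵥ b)) j.castSucc
        else if (j : ℕ) = k then 0 else b j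
      map_add' := fun v w => by
        ext j; simp only [mulVec_add, map_add, Pi.add_apply]; split_ifs <;> simp
      map_smul' := fun a w => by
        ext j; simp only [mulVec_smul, map_smul, Pi.smul_apply, RingHom.id_apply]
        split_ifs <;> simp }
  have hF : ¬ Function.Injective F := by
    rw [LinearMap.injective_iff_surjective]
    intro hs
    obtain ⟨b, hb⟩ := hs (fun _ => 1)
    have := congrFun hb ⟨k, hk⟩
    simp [F] at this
  obtain ⟨b, hb0, hFb⟩ : ∃ b, b ≠ 0 ∧ F b = 0 := by
    rw [injective_iff_map_eq_zero] at hF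
    push Not at hF
    obtain ⟨b, h1, h2⟩ := hF
    exact ⟨b, h2, h1⟩
  have hbk : ∀ j : Fin n, k < j → b j = 0 := fun j hj => by
    have := congrFun hFb j
    simpa [F, hj.not_gt, hj.ne'] using this
  set v := E (W *ᵥ b) with hv
  have hvk : ∀ j : Fin (n + 1), (j : ℕ) < k → (Uᵀ *ᵥ v) j = 0 := fun j hj => by
    have := congrFun hFb ⟨j, hj.trans hk⟩
    simpa [F, hj] using this
  have quad : ∀ {N : ℕ} (V : Matrix (Fin N) (Fin N) ℝ) (d : Fin N → ℝ) (w : Fin N → ℝ),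
      w ⬝ᵥ ((V * diagonal d * Vᵀ) *ᵥ w) = ∑ j, d j * (Vᵀ *ᵥ w) j ^ 2 := by
    intro N V d w
    rw [← mulVec_mulVec, ← mulVec_mulVec, dotProduct_mulVec, ← mulVec_transpose]
    simp only [dotProduct, mulVec_diagonal]
    exact Finset.sum_congr rfl fun j _ => by ring
  have hWb : Wᵀ *ᵥ (W *ᵥ b) = b := by rw [mulVec_mulVec, hB.2.1, one_mulVec]
  have hUU : U * Uᵀ = 1 := mul_eq_one_comm.mp hA.2.1
  have hnorm : v ⬝ᵥ v = ∑ j, b j ^ 2 := by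
    have h1 : v ⬝ᵥ v = (W *ᵥ b) ⬝ᵥ (W *ᵥ b) := by
      simp only [dotProduct, Fin.sum_univ_succAbove _ i, hv, hE0, hE1]
      simp
    rw [h1, dotProduct_mulVec, ← mulVec_transpose, hWb]
    simp [dotProduct, sq]
  have hnorm' : v ⬝ᵥ v = ∑ j, (Uᵀ *ᵥ v) j ^ 2 := by
    have := quad U (fun _ => 1) v
    simpa [hUU] using this
  have hform : v ⬝ᵥ (A *ᵥ v) = ∑ j : Fin n, m j * b j ^ 2 := by
    have h1 := quad W (fun j => m j) (W *ᵥ b)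
    rw [← hB.2.2, hWb] at h1
    rw [← h1]
    simp only [dotProduct, mulVec, Fin.sum_univ_succAbove _ i, hv, hE0, hE1]
    simp
  have hform' : v ⬝ᵥ (A *ᵥ v) = ∑ j : Fin (n + 1), l j * (Uᵀ *ᵥ v) j ^ 2 := by
    have := quad U (fun j => l j) v
    rwa [← hA.2.2] at this
  have hlow : m k * (v ⬝ᵥ v) ≤ v ⬝ᵥ (A *ᵥ v) := by
    rw [hform, hnorm, Finset.mul_sum]
    refine Finset.sum_le_sum fun j _ => ?_
    by_cases hj : k < j
    · simp [hbk j hj]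
    · exact mul_le_mul_of_nonneg_right (hB.1 j k (not_lt.mp hj) hk) (sq_nonneg _)
  have hup : v ⬝ᵥ (A *ᵥ v) ≤ l k * (v ⬝ᵥ v) := by
    rw [hform', hnorm', Finset.mul_sum]
    refine Finset.sum_le_sum fun j _ => ?_
    by_cases hj : (j : ℕ) < k
    · simp [hvk j hj]
    · exact mul_le_mul_of_nonneg_right (hA.1 k j (not_lt.mp hj) j.2) (sq_nonneg _)
  have hpos : 0 < v ⬝ᵥ v := by
    rw [hnorm]
    obtain ⟨j, hj⟩ := Function.ne_iff.mp hb0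
    exact Finset.sum_pos' (fun j _ => sq_nonneg _) ⟨j, Finset.mem_univ _, by
      have : b j ≠ 0 := hj
      positivity⟩
  exact le_of_mul_le_mul_right (hlow.trans hup) hpos

/-- The entries of the adjugate of `X - A` have nonnegative coefficients in the Newton basis
attached to the eigenvalues of `A`, listed from the largest. -/
lemma adjugate_charmatrix_inNewtonCone {n : ℕ} {A U : Matrix (Fin n) (Fin n) ℝ} {l : ℕ → ℝ}
    (hsymm : A.IsSymm) (hnn : ∀ i j, 0 ≤ A i j) (hA : IsDiagonalization A U l) (i j : Fin n) :
    InNewtonCone l n (A.charmatrix.adjugate i j) := by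
  induction n generalizing l with
  | zero => exact i.elim0
  | succ n ih =>
    set B := A.submatrix i.succAbove i.succAbove with hBdef
    have hBs : B.IsSymm := hsymm.submatrix _
    obtain ⟨W, m, hB⟩ := exists_isDiagonalization B hBs
    have hchar : A.charmatrix.submatrix i.succAbove i.succAbove = B.charmatrix := by
      ext1 a b
      simp [charmatrix_apply, hBdef, diagonal_apply]
    have hle : ∀ j < n, ∀ k ≤ j, m j ≤ l k := fun j hj k hk =>
      (hB.1 k j hk hj).trans (interlacing hA i hB k (hk.trans_lt hj))
    have hcone : ∀ k < n + 1, InNewtonCone l (n + 1) (newton m k) := fun k hk =>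
      (InNewtonCone.newton_of_le k fun j hj => hle j (by omega)).mono (by omega)
    refine Fin.succAboveCases i ?_ (fun j => ?_) j
    · rw [adjugate_fin_succ_eq_det_submatrix, ← two_mul, pow_mul, hchar]
      have := charpoly_of_isDiagonalization hB
      rw [charpoly] at this
      rw [this]
      simpa using hcone n (Nat.lt_succ_self n)
    · rw [adjugate_apply_succAbove _ i (charpoly_monic A).ne_zero
        (by rw [hchar]; exact (charpoly_monic B).ne_zero), ← Finset.sum_neg_distrib]
      refine InNewtonCone.sum _ _ fun k _ => ?_
      rw [charmatrix_apply_ne _ _ _ (Fin.succAbove_ne i k).symm, neg_mul, neg_neg, hchar]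
      refine InNewtonCone.C_mul ?_ (hnn _ _)
      obtain ⟨c, hc, hp⟩ := ih hBs (fun _ _ => hnn _ _) hB k j
      rw [hp]
      exact InNewtonCone.sum _ _ fun k hk =>
        (hcone k ((Finset.mem_range.mp hk).trans (Nat.lt_succ_self n))).C_mul (hc k)

/-- The product `(A - b 0) ⋯ (A - b (k - 1))`. -/
def specProd {n : ℕ} (A : Matrix (Fin n) (Fin n) ℝ) (b : ℕ → ℝ) : ℕ → Matrix (Fin n) (Fin n) ℝ
  | 0 => 1
  | k + 1 => specProd A b k * (A - b k • 1)

lemma specProd_eq_aeval {n : ℕ} (A : Matrix (Fin n) (Fin n) ℝ) (b : ℕ → ℝ) (k : ℕ) :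
    specProd A b k = aeval A (newton b k) := by
  induction k with
  | zero => simp [specProd, newton]
  | succ k ih => simp [specProd, newton_succ, ih, Algebra.algebraMap_eq_smul_one]

lemma commute_specProd {n : ℕ} (A : Matrix (Fin n) (Fin n) ℝ) (b : ℕ → ℝ) (k : ℕ) :
    A * specProd A b k = specProd A b k * A := by
  rw [specProd_eq_aeval]
  have h := Algebra.commute_of_mem_adjoin_self (aeval_mem_adjoin_singleton ℝ A (p := newton b k))
  exact h.eq.symm ▸ rfl

lemma adjugate_charmatrix_eq {n : ℕ} (A : Matrix (Fin n) (Fin n) ℝ) (b l : ℕ → ℝ)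
    (hchar : A.charpoly = newton b n) (hl : ∀ k < n, l (n - 1 - k) = b k) :
    A.charmatrix.adjugate =
      ∑ k ∈ Finset.range n, newton l (n - 1 - k) • (specProd A b k).map C := by
  have hnl : newton l n = newton b n := by
    rw [newton, newton, ← Finset.prod_range_reflect]
    exact Finset.prod_congr rfl fun k hk => by rw [hl k (Finset.mem_range.mp hk)]
  have hzero : specProd A b n = 0 := by
    rw [specProd_eq_aeval, ← hchar, aeval_self_charpoly]
  have hmul : A.charmatrix * ∑ k ∈ Finset.range n, newton l (n - 1 - k) • (specProd A b k).map C =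
      A.charpoly • (1 : Matrix (Fin n) (Fin n) ℝ[X]) := by
    have hstep : ∀ k ∈ Finset.range n,
        A.charmatrix * (newton l (n - 1 - k) • (specProd A b k).map C) =
          newton l (n - k) • (specProd A b k).map C -
            newton l (n - (k + 1)) • (specProd A b (k + 1)).map C := by
      intro k hk
      have hk := Finset.mem_range.mp hk
      have e1 : n - k = (n - 1 - k) + 1 := by omega
      have e2 : n - (k + 1) = n - 1 - k := by omega
      have hcm : A.charmatrix = (X : ℝ[X]) • (1 : Matrix (Fin n) (Fin n) ℝ[X]) - A.map C := by
        ext1 a c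
        simp [charmatrix_apply, diagonal_apply, Matrix.one_apply]
      have hs : (specProd A b (k + 1)).map C =
          A.map C * (specProd A b k).map C - C (b k) • (specProd A b k).map C := by
        rw [specProd, mul_sub, ← commute_specProd, mul_smul_comm, mul_one, ← Matrix.map_mul]
        ext1 a c
        simp [-Matrix.map_mul]
      rw [e1, e2, newton_succ, hl k hk, hs, hcm, mul_smul_comm, sub_mul, smul_mul_assoc, one_mul,
        mul_smul, ← smul_sub, sub_smul]
      congr 1
      abel
    rw [Finset.mul_sum, Finset.sum_congr rfl hstep,
      Finset.sum_range_sub' (fun k => newton l (n - k) • (specProd A b k).map C), hzero,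
      Nat.sub_zero, hnl, ← hchar]
    simp [specProd]
  have h1 := congrArg (A.charmatrix.adjugate * ·) hmul
  simp only [← mul_assoc, adjugate_mul] at h1
  rw [smul_mul_assoc, one_mul, mul_smul_comm, mul_one] at h1
  exact (smul_right_injective _ (charpoly_monic A).ne_zero h1).symm

/-- The **Micchelli–Willoughby theorem**, for eigenvalues given by a diagonalization. -/
lemma specProd_nonneg_of_isDiagonalization {n : ℕ} {A U : Matrix (Fin n) (Fin n) ℝ} {l : ℕ → ℝ}
    (hsymm : A.IsSymm) (hnn : ∀ i j, 0 ≤ A i j) (hA : IsDiagonalization A U l)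
    (b : ℕ → ℝ) (hl : ∀ k < n, l (n - 1 - k) = b k) (k : ℕ) (hk : k < n) (i j : Fin n) :
    0 ≤ specProd A b k i j := by
  have hnl : newton l n = newton b n := by
    rw [newton, newton, ← Finset.prod_range_reflect]
    exact Finset.prod_congr rfl fun k hk => by rw [hl k (Finset.mem_range.mp hk)]
  obtain ⟨c, hc, hp⟩ := adjugate_charmatrix_inNewtonCone hsymm hnn hA i j
  rw [adjugate_charmatrix_eq A b l ((charpoly_of_isDiagonalization hA).trans hnl) hl] at hp
  have h := newton_coeff_unique l n (fun m => specProd A b (n - 1 - m) i j) c (by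
    rw [← hp, ← Finset.sum_range_reflect, Matrix.sum_apply]
    refine Finset.sum_congr rfl fun k hk => ?_
    have hk := Finset.mem_range.mp hk
    have e : n - 1 - (n - 1 - k) = k := by omega
    simp [e, mul_comm]) (n - 1 - k) (by omega)
  have e : n - 1 - (n - 1 - k) = k := by omega
  simp only [e] at h
  rw [h]
  exact hc _


/-- Extension of a finite sequence by zero. -/
def extendZero {n : ℕ} (b : Fin n → ℝ) (k : ℕ) : ℝ := if h : k < n then b ⟨k, h⟩ else 0

lemma extendZero_val {n : ℕ} (b : Fin n → ℝ) (i : Fin n) : extendZero b i = b i := by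
  simp [extendZero]

lemma newton_extendZero {n : ℕ} (b : Fin n → ℝ) :
    newton (extendZero b) n = ∏ i, (X - C (b i)) := by
  simp only [newton, Finset.prod_range, extendZero_val]

lemma exists_specProd_nonneg_of_reversible {n : ℕ} {M : Matrix (Fin n) (Fin n) ℝ}
    (hM : ∀ i j, 0 ≤ M i j) {p : Fin n → ℝ} (hp : ∀ i, 0 < p i)
    (hrev : ∀ i j, p i * M i j = p j * M j i) :
    ∃ b : Fin n → ℝ, Monotone b ∧ M.charpoly = ∏ i, (X - C (b i)) ∧
      ∀ k < n, ∀ i j, 0 ≤ specProd M (extendZero b) k i j := by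
  have hs : ∀ i, 0 < √(p i) := fun i => Real.sqrt_pos.mpr (hp i)
  set D : Matrix (Fin n) (Fin n) ℝ := diagonal fun i => √(p i) with hD
  set D' : Matrix (Fin n) (Fin n) ℝ := diagonal fun i => (√(p i))⁻¹ with hD'
  have hDD' : D * D' = 1 := by
    rw [hD, hD', diagonal_mul_diagonal, ← diagonal_one]
    congr 1
    ext i
    exact mul_inv_cancel₀ (hs i).ne'
  have hD'D : D' * D = 1 := mul_eq_one_comm.mp hDD'
  set S := D * M * D' with hS
  have hSij : ∀ i j, S i j = √(p i) * M i j * (√(p j))⁻¹ := fun i j => by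
    simp [hS, hD, hD', mul_diagonal, diagonal_mul]
  have hSnn : ∀ i j, 0 ≤ S i j := fun i j => by
    rw [hSij]
    exact mul_nonneg (mul_nonneg (hs i).le (hM i j)) (inv_nonneg.mpr (hs j).le)
  have hSs : S.IsSymm := by
    ext i j
    rw [transpose_apply, hSij, hSij, ← div_eq_mul_inv, ← div_eq_mul_inv,
      div_eq_div_iff (hs i).ne' (hs j).ne']
    have := hrev j i
    rw [← Real.mul_self_sqrt (hp i).le, ← Real.mul_self_sqrt (hp j).le] at this
    linarith
  have hSchar : S.charpoly = M.charpoly := by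
    rw [hS, charpoly_mul_comm, ← mul_assoc, hD'D, one_mul]
  have hconj : ∀ (b : ℕ → ℝ) (k : ℕ), specProd S b k = D * specProd M b k * D' := by
    intro b k
    induction k with
    | zero => simp [specProd, hDD']
    | succ k ih =>
      have : S - b k • 1 = D * (M - b k • 1) * D' := by
        rw [mul_sub, sub_mul, ← hS, mul_smul_comm, smul_mul_assoc, mul_one, hDD']
      rw [specProd, ih, this, specProd]
      calc D * specProd M b k * D' * (D * (M - b k • 1) * D')
          = D * specProd M b k * (D' * D) * (M - b k • 1) * D' := by simp only [mul_assoc]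
        _ = _ := by rw [hD'D, mul_one]; simp only [mul_assoc]
  obtain ⟨U, l, hl⟩ := exists_isDiagonalization S hSs
  have hlb : ∀ k < n, l (n - 1 - k) = extendZero (fun i : Fin n => l (n - 1 - i)) k :=
    fun k hk => by simp [extendZero, hk]
  refine ⟨fun i => l (n - 1 - i), fun i j hij => hl.1 _ _ ?_ (by omega), ?_, fun k hk i j => ?_⟩
  · have : (i : ℕ) ≤ j := hij
    omega
  · rw [← hSchar, charpoly_of_isDiagonalization hl, newton, ← Finset.prod_range_reflect,
      Finset.prod_range]
  · have h := specProd_nonneg_of_isDiagonalization hSs hSnn hl _ hlb k hk i j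
    rw [hconj, hD, hD', mul_diagonal, diagonal_mul] at h
    exact nonneg_of_mul_nonneg_right
      (nonneg_of_mul_nonneg_left h (inv_pos.mpr (hs j))) (hs i)

lemma abs_le_one_of_isRoot_charpoly {n : ℕ} {M : Matrix (Fin n) (Fin n) ℝ}
    (hM : ∀ i j, 0 ≤ M i j) (hM1 : ∀ i, ∑ j, M i j = 1) {z : ℝ} (hz : M.charpoly.IsRoot z) :
    |z| ≤ 1 := by
  have hz' : Module.End.HasEigenvalue (toLin' M) z := by
    rw [Module.End.hasEigenvalue_iff_isRoot_charpoly, charpoly_toLin']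
    exact hz
  obtain ⟨k, hk⟩ := eigenvalue_mem_ball hz'
  rw [Metric.mem_closedBall, Real.dist_eq] at hk
  have h1 := Finset.add_sum_erase Finset.univ (M k) (Finset.mem_univ k)
  have h2 : ∑ j ∈ Finset.univ.erase k, ‖M k j‖ = ∑ j ∈ Finset.univ.erase k, M k j :=
    Finset.sum_congr rfl fun j _ => Real.norm_of_nonneg (hM k j)
  rw [h2] at hk
  calc |z| = |(z - M k k) + M k k| := by ring_nf
    _ ≤ |z - M k k| + |M k k| := abs_add_le _ _
    _ ≤ 1 := by rw [abs_of_nonneg (hM k k), ← hM1 k, ← h1]; linarith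

lemma continuous_specProd {α : Type*} [TopologicalSpace α] {n : ℕ}
    {A : α → Matrix (Fin n) (Fin n) ℝ} {b : α → ℕ → ℝ} (hA : Continuous A) (hb : Continuous b)
    (k : ℕ) : Continuous fun a => specProd (A a) (b a) k := by
  induction k with
  | zero => exact continuous_const
  | succ k ih =>
    exact ih.matrix_mul (hA.sub (((continuous_apply k).comp hb).smul continuous_const))

lemma continuous_extendZero {n : ℕ} : Continuous (extendZero : (Fin n → ℝ) → ℕ → ℝ) := by
  refine continuous_pi fun k => ?_
  unfold extendZero
  by_cases h : k < n
  · simpa [h] using continuous_apply (⟨k, h⟩ : Fin n)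
  · simpa [h] using continuous_const

lemma exists_specProd_nonneg_of_mem_revClosure {n : ℕ} {P : Matrix (Fin n) (Fin n) ℝ}
    (hP : P ∈ RevClosure n) :
    (∀ i, ∑ j, P i j = 1) ∧
    ∃ b : Fin n → ℝ, Monotone b ∧ P.charpoly = ∏ i, (X - C (b i)) ∧
      ∀ k < n, ∀ i j, 0 ≤ specProd P (extendZero b) k i j := by
  let K : Set (Fin n → ℝ) := Set.Icc (fun _ => -1) (fun _ => 1)
  have : CompactSpace K := isCompact_iff_compactSpace.mp isCompact_Icc
  let T : Set (Matrix (Fin n) (Fin n) ℝ × K) :=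
    {q | (∀ i, ∑ j, q.1 i j = 1) ∧ (∀ i j, i ≤ j → q.2.1 i ≤ q.2.1 j) ∧
      (∀ z, (scalar (Fin n) z - q.1).det = ∏ i, (z - q.2.1 i)) ∧
      ∀ k, k < n → ∀ i j, 0 ≤ specProd q.1 (extendZero q.2.1) k i j}
  have hent : ∀ i j, Continuous fun q : Matrix (Fin n) (Fin n) ℝ × K => q.1 i j :=
    fun i j => continuous_fst.matrix_elem i j
  have hval : Continuous fun q : Matrix (Fin n) (Fin n) ℝ × K => q.2.1 :=
    continuous_subtype_val.comp continuous_snd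
  have hb : ∀ i, Continuous fun q : Matrix (Fin n) (Fin n) ℝ × K => q.2.1 i :=
    fun i => (continuous_apply i).comp hval
  have hT : IsClosed T := by
    refine IsClosed.and ?_ (IsClosed.and ?_ (IsClosed.and ?_ ?_))
    · simp only [Set.ofPred_forall]
      exact isClosed_iInter fun i =>
        isClosed_eq (continuous_finsetSum _ fun j _ => hent i j) continuous_const
    · simp only [Set.ofPred_forall]
      exact isClosed_iInter fun i => isClosed_iInter fun j => isClosed_iInter fun _ =>
        isClosed_le (hb i) (hb j)
    · simp only [Set.ofPred_forall]
      exact isClosed_iInter fun z => isClosed_eq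
        (continuous_const.sub continuous_fst).matrix_det
        (continuous_finsetProd _ fun i _ => continuous_const.sub (hb i))
    · simp only [Set.ofPred_forall]
      exact isClosed_iInter fun k => isClosed_iInter fun _ => isClosed_iInter fun i =>
        isClosed_iInter fun j => isClosed_le continuous_const
          ((continuous_specProd continuous_fst (continuous_extendZero.comp hval) k).matrix_elem i j)
  have hcl : IsClosed (Prod.fst '' T) := isClosedMap_fst_of_compactSpace T hT
  have hsub : RevClosure n ⊆ Prod.fst '' T := by
    refine closure_minimal ?_ hcl
    rintro M ⟨hM, hM1, p, hp, -, hrev⟩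
    obtain ⟨b, hbm, hbc, hbn⟩ := exists_specProd_nonneg_of_reversible hM hp hrev
    have hbK : ∀ i, |b i| ≤ 1 := fun i => abs_le_one_of_isRoot_charpoly hM hM1 (by
      rw [hbc, IsRoot.def, eval_prod]
      exact Finset.prod_eq_zero (Finset.mem_univ i) (by simp))
    refine ⟨(M, ⟨b, fun i => (abs_le.mp (hbK i)).1, fun i => (abs_le.mp (hbK i)).2⟩),
      ⟨hM1, fun i j hij => hbm hij, fun z => ?_, hbn⟩, rfl⟩
    rw [← eval_charpoly, hbc, eval_prod]
    simp
  obtain ⟨⟨M, b⟩, ⟨h1, hbm, hbc, hbn⟩, rfl⟩ := hsub hP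
  refine ⟨h1, b.1, fun i j hij => hbm i j hij, ?_, hbn⟩
  refine Polynomial.funext fun z => ?_
  rw [eval_charpoly, hbc, eval_prod]
  simp

lemma monotone_eq_of_prod_X_sub_C_eq {n : ℕ} {b c : Fin n → ℝ} (hb : Monotone b)
    (hc : Monotone c) (h : ∏ i, (X - C (b i)) = ∏ i, (X - C (c i))) : b = c := by
  have hroots : ∀ d : Fin n → ℝ,
      (∏ i, (X - C (d i))).roots = ((List.ofFn d : List ℝ) : Multiset ℝ) := fun d => by
    rw [roots_prod _ _ (Finset.prod_ne_zero_iff.mpr fun i _ => X_sub_C_ne_zero _)]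
    simp [Fin.univ_val_map]
  have hperm := congrArg roots h
  rw [hroots, hroots, Multiset.coe_eq_coe] at hperm
  exact List.ofFn_injective (hperm.eq_of_sortedLE hb.sortedLE_ofFn hc.sortedLE_ofFn)

lemma exists_eq_const_of_mulVec_eq {n : ℕ} {P : Matrix (Fin n) (Fin n) ℝ}
    (hP1 : ∀ i, ∑ j, P i j = 1) (hroot : P.charpoly.rootMultiplicity 1 ≤ 1)
    {v : Fin n → ℝ} (hv : P *ᵥ v = v) : ∃ c, ∀ i, v i = c := by
  have hfin := (LinearMap.finrank_eigenspace_le (toLin' P) 1).trans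
    ((charpoly_toLin' P).symm ▸ hroot)
  obtain ⟨w, hw⟩ := finrank_le_one_iff.mp hfin
  have hmem : ∀ u, P *ᵥ u = u → u ∈ Module.End.eigenspace (toLin' P) 1 := fun u hu => by
    rw [Module.End.mem_eigenspace_iff, toLin'_apply, hu, one_smul]
  have hone : P *ᵥ (fun _ => 1) = fun _ => 1 := by
    ext i
    simpa [mulVec, dotProduct] using hP1 i
  obtain ⟨a, ha⟩ := hw ⟨_, hmem _ hone⟩
  obtain ⟨c, hc⟩ := hw ⟨v, hmem v hv⟩
  have ha' : ∀ i, a * w.1 i = 1 := fun i => congrFun (congrArg Subtype.val ha) i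
  have hc' : ∀ i, c * w.1 i = v i := fun i => congrFun (congrArg Subtype.val hc) i
  refine ⟨c / a, fun i => ?_⟩
  have : a ≠ 0 := left_ne_zero_of_mul_eq_one (ha' i)
  rw [← hc' i, eq_div_iff this]
  linear_combination c * ha' i

lemma rootMultiplicity_prod_X_sub_C_le_one {n : ℕ} (b : Fin n → ℝ) (z : ℝ)
    (h : ∀ i j, b i = z → b j = z → i = j) :
    (∏ i, (X - C (b i))).rootMultiplicity z ≤ 1 := by
  rw [← count_roots, roots_prod _ _ (Finset.prod_ne_zero_iff.mpr fun i _ => X_sub_C_ne_zero _)]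
  simp only [roots_X_sub_C, Multiset.bind_singleton, Multiset.count_map]
  rw [← Finset.filter_val, Finset.card_val, Finset.card_le_one]
  intro i hi j hj
  simp only [Finset.mem_filter] at hi hj
  exact h i j hi.2.symm hj.2.symm

/-- The probability that a sum of independent geometric variables with failure probabilities `c`
is at most `t`, provided `t ≤ T`. -/
noncomputable def geomSumCdf {n : ℕ} (c : Fin n → ℝ) (T t : ℕ) : ℝ :=
  ∑ v : Fin n → Fin (T + 1),
    if (∀ j, 1 ≤ (v j : ℕ)) ∧ (∑ j, (v j : ℕ)) ≤ t then
      ∏ j, c j ^ ((v j : ℕ) - 1) * (1 - c j) else 0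

lemma geomSumCdf_zero (c : Fin 0 → ℝ) (T t : ℕ) : geomSumCdf c T t = 1 := by
  simp [geomSumCdf]

lemma geomSumCdf_succ {n : ℕ} (c : Fin (n + 1) → ℝ) {T t : ℕ} (ht : t ≤ T) :
    geomSumCdf c T t =
      ∑ u ∈ Finset.range t, c 0 ^ u * (1 - c 0) * geomSumCdf (fun j => c j.succ) T (t - 1 - u) := by
  have h1 : geomSumCdf c T t = ∑ s ∈ Finset.range (T + 1), if 1 ≤ s ∧ s ≤ t then
      c 0 ^ (s - 1) * (1 - c 0) * geomSumCdf (fun j => c j.succ) T (t - s) else 0 := by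
    rw [Finset.sum_range, geomSumCdf, ← (Fin.consEquiv fun _ => Fin (T + 1)).sum_comp,
      Fintype.sum_prod_type]
    refine Finset.sum_congr rfl fun s _ => ?_
    rw [geomSumCdf, Finset.mul_sum]
    by_cases hs : 1 ≤ (s : ℕ) ∧ (s : ℕ) ≤ t
    · rw [if_pos hs]
      refine Finset.sum_congr rfl fun v _ => ?_
      rw [mul_ite, mul_zero]
      simp only [Fin.consEquiv_apply, Fin.forall_fin_succ, Fin.sum_univ_succ, Fin.prod_univ_succ,
        Fin.cons_zero, Fin.cons_succ]
      congr 1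
      rw [eq_iff_iff, and_assoc, and_iff_right hs.1]
      exact and_congr_right fun _ => by omega
    · rw [if_neg hs]
      refine Finset.sum_eq_zero fun v _ => if_neg ?_
      rintro ⟨h1, h2⟩
      have h0 := h1 0
      simp only [Fin.consEquiv_apply, Fin.sum_univ_succ, Fin.cons_zero] at h0 h2
      exact hs ⟨h0, by omega⟩
  rw [h1, Finset.sum_range_succ']
  simp only [nonpos_iff_eq_zero, one_ne_zero, false_and, if_false, add_zero, Nat.add_sub_cancel]
  rw [← Finset.sum_subset (Finset.range_mono ht)]
  · refine Finset.sum_congr rfl fun u hu => ?_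
    have := Finset.mem_range.mp hu
    rw [if_pos (by omega), Nat.sub_sub, add_comm 1 u]
  · intro u _ hu
    have := mt Finset.mem_range.mpr hu
    exact if_neg (by omega)

lemma mul_pow_eq_of_mul_eq {ι : Type*} [Fintype ι] [DecidableEq ι] {P E F : Matrix ι ι ℝ} {a : ℝ}
    (h : E * P = a • E + (1 - a) • F) (t : ℕ) :
    E * P ^ t = a ^ t • E +
      ∑ u ∈ Finset.range t, (a ^ u * (1 - a)) • (F * P ^ (t - 1 - u)) := by
  induction t with
  | zero => simp
  | succ t ih =>
    have hsum : ∀ u ∈ Finset.range t, (a ^ (u + 1) * (1 - a)) • (F * P ^ (t + 1 - 1 - (u + 1))) =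
        a • (a ^ u * (1 - a)) • (F * P ^ (t - 1 - u)) := fun u _ => by
      rw [smul_smul, show t + 1 - 1 - (u + 1) = t - 1 - u by omega]
      congr 1
      ring
    rw [pow_succ', ← mul_assoc, h, add_mul, smul_mul_assoc, ih, Finset.sum_range_succ',
      Finset.sum_congr rfl hsum, ← Finset.smul_sum, smul_add, smul_smul, ← pow_succ' a]
    simp [add_assoc]

lemma geomSumCdf_mul_le {ι : Type*} [Fintype ι] [DecidableEq ι] {P : Matrix ι ι ℝ} {n : ℕ}
    (E : ℕ → Matrix ι ι ℝ) (c : Fin n → ℝ) (hc0 : ∀ j, 0 ≤ c j) (hc1 : ∀ j, c j ≤ 1)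
    (hstep : ∀ j : Fin n, E j * P = c j • E j + (1 - c j) • E (j + 1)) (hlast : E n * P = E n)
    (hnn : ∀ k ≤ n, ∀ x y, 0 ≤ E k x y) {T t : ℕ} (ht : t ≤ T) (x y : ι) :
    geomSumCdf c T t * E n x y ≤ (E 0 * P ^ t) x y := by
  induction n generalizing E t with
  | zero =>
    have : ∀ s, E 0 * P ^ s = E 0 := fun s => by
      induction s with
      | zero => simp
      | succ s ih => rw [pow_succ, ← mul_assoc, ih, hlast]
    rw [geomSumCdf_zero, one_mul, this]
  | succ n ih =>
    have h0 : E 0 * P = c 0 • E 0 + (1 - c 0) • E 1 := by simpa using hstep 0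
    rw [geomSumCdf_succ c ht, mul_pow_eq_of_mul_eq h0 t, Matrix.add_apply, Matrix.sum_apply,
      Finset.sum_mul]
    refine (Finset.sum_le_sum fun u _ => ?_).trans (le_add_of_nonneg_left
      (mul_nonneg (pow_nonneg (hc0 0) t) (hnn 0 (Nat.zero_le _) x y)))
    rw [mul_assoc, Matrix.smul_apply, smul_eq_mul]
    refine mul_le_mul_of_nonneg_left ?_
      (mul_nonneg (pow_nonneg (hc0 0) u) (sub_nonneg.mpr (hc1 0)))
    exact ih (fun k => E (k + 1)) (fun j => c j.succ) (fun j => hc0 _) (fun j => hc1 _)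
      (fun j => by simpa using hstep j.succ) hlast (fun k hk => hnn (k + 1) (by omega)) (by omega)

lemma vecMul_specProd {n : ℕ} {P : Matrix (Fin n) (Fin n) ℝ} {v : Fin n → ℝ} (hv : v ᵥ* P = v)
    (b : ℕ → ℝ) (k : ℕ) :
    v ᵥ* specProd P b k = (∏ j ∈ Finset.range k, (1 - b j)) • v := by
  induction k with
  | zero => simp [specProd]
  | succ k ih =>
    rw [specProd, ← vecMul_vecMul, ih, smul_vecMul, vecMul_sub, hv, vecMul_smul, vecMul_one,
      Finset.prod_range_succ, mul_smul, sub_smul, one_smul]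

end MicchelliWilloughby

/-- Theorem 1.4 of the paper: for reversible `P` with nonnegative eigenvalues
`0 ≤ β_1 ≤ ⋯ ≤ β_{N-1} < β_N = 1`, any initial distribution `μ`, and any `t ≥ 0`,
the separation distance satisfies `d_sep(μP^t, π) ≤ P(τ_1 + ⋯ + τ_{N-1} > t)`, where
the `τ_j` are independent geometrics with `P(τ_j = s) = β_j^{s-1}(1-β_j)`.  The
right-hand side is written as `1` minus the explicit probability that the sum of the
geometrics is at most `t`, and the separation bound is stated for each state `x`
with `π(x) > 0`. -/
theorem separation_bound (N : ℕ) (hN : 2 ≤ N)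
    (P : Matrix (Fin N) (Fin N) ℝ) (hPcl : P ∈ RevClosure N)
    (piv : Fin N → ℝ) (hpiv0 : ∀ i, 0 ≤ piv i) (hpiv1 : ∑ i, piv i = 1)
    (hstat : ∀ j, ∑ i, piv i * P i j = piv j)
    (hrev : ∀ i j, piv i * P i j = piv j * P j i)
    (β : Fin N → ℝ)
    (hchar : P.charpoly = ∏ j, (Polynomial.X - Polynomial.C (β j)))
    (hmono : Monotone β) (hβ0 : ∀ j, 0 ≤ β j)
    (hβlt : ∀ j : Fin N, (j : ℕ) < N - 1 → β j < 1)
    (hβlast : ∀ j : Fin N, (j : ℕ) = N - 1 → β j = 1)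
    (μ : Fin N → ℝ) (hμ0 : ∀ x, 0 ≤ μ x) (hμ1 : ∑ x, μ x = 1)
    (t : ℕ) (x : Fin N) (hx : 0 < piv x) :
    1 - (∑ y, μ y * (P ^ t) y x) / piv x ≤
      1 - ∑ v : Fin (N - 1) → Fin (t + 1),
        if (∀ j, 1 ≤ ((v j : ℕ))) ∧ (∑ j, (v j : ℕ)) ≤ t then
          ∏ j : Fin (N - 1), β ⟨(j : ℕ), by omega⟩ ^ ((v j : ℕ) - 1)
            * (1 - β ⟨(j : ℕ), by omega⟩)
        else 0 := by
  obtain ⟨hP1, b, hbm, hbc, hbn⟩ :=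
    MicchelliWilloughby.exists_specProd_nonneg_of_mem_revClosure hPcl
  obtain rfl : b = β :=
    MicchelliWilloughby.monotone_eq_of_prod_X_sub_C_eq hbm hmono (hbc.symm.trans hchar)
  obtain ⟨n, rfl⟩ : ∃ n, N = n + 1 := ⟨N - 1, by omega⟩
  set e := MicchelliWilloughby.extendZero b with he
  have hlt : ∀ k < n, e k < 1 := fun k hk => by
    have := hβlt ⟨k, by omega⟩ (by simpa using hk)
    rwa [← MicchelliWilloughby.extendZero_val b] at this
  have hen : e n = 1 := by
    have := hβlast ⟨n, by omega⟩ (by simp)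
    rwa [← MicchelliWilloughby.extendZero_val b] at this
  have hroot : P.charpoly.rootMultiplicity 1 ≤ 1 := by
    rw [hchar]
    have hlast : ∀ i, b i = 1 → (i : ℕ) = n := fun i hi => by
      by_contra hne
      exact (hβlt i (by omega)).ne hi
    exact MicchelliWilloughby.rootMultiplicity_prod_X_sub_C_le_one b 1 fun i j hi hj =>
      Fin.ext ((hlast i hi).trans (hlast j hj).symm)
  set w : ℕ → ℝ := fun k => ∏ j ∈ Finset.range k, (1 - e j) with hw
  have hwpos : ∀ k ≤ n, 0 < w k := fun k hk => Finset.prod_pos fun j hj =>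
    sub_pos.mpr (hlt j ((Finset.mem_range.mp hj).trans_le hk))
  set S := MicchelliWilloughby.specProd P e with hS
  let E : ℕ → Matrix (Fin (n + 1)) (Fin (n + 1)) ℝ := fun k => (w k)⁻¹ • S k
  have hSstep : ∀ k, S k * P = e k • S k + S (k + 1) := fun k => by
    simp [hS, MicchelliWilloughby.specProd, mul_sub]
  have hSend : S (n + 1) = 0 := by
    rw [hS, MicchelliWilloughby.specProd_eq_aeval, he,
      MicchelliWilloughby.newton_extendZero, ← hchar, Matrix.aeval_self_charpoly]
  have hEstep : ∀ k < n, E k * P = e k • E k + (1 - e k) • E (k + 1) := fun k hk => by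
    have h1 : 1 - e k ≠ 0 := (sub_pos.mpr (hlt k hk)).ne'
    have h2 : (w (k + 1))⁻¹ = (1 - e k)⁻¹ * (w k)⁻¹ := by
      rw [hw]
      simp only [Finset.prod_range_succ, mul_inv_rev]
    simp only [E]
    rw [smul_mul_assoc, hSstep, smul_add, h2, smul_smul (1 - e k), mul_inv_cancel_left₀ h1,
      smul_comm]
  have hElast : E n * P = E n := by
    simp only [E]
    rw [smul_mul_assoc, hSstep, hSend, hen, one_smul, add_zero]
  have hEnn : ∀ k ≤ n, ∀ i j, 0 ≤ E k i j := fun k hk i j =>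
    mul_nonneg (inv_nonneg.mpr (hwpos k hk).le) (hbn k (by omega) i j)
  have hEpi : ∀ i j, E n i j = piv j := by
    intro i j
    have hPE : P * E n = E n := by
      refine Eq.trans ?_ hElast
      simp only [E]
      rw [mul_smul_comm, smul_mul_assoc, hS, MicchelliWilloughby.commute_specProd]
    obtain ⟨d, hd⟩ := MicchelliWilloughby.exists_eq_const_of_mulVec_eq hP1 hroot
      (v := fun i => E n i j) (by
        ext i
        exact congrFun (congrFun hPE i) j)
    have hstat' : Matrix.vecMul piv P = piv := funext hstat
    have h := congrFun (MicchelliWilloughby.vecMul_specProd hstat' e n) j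
    have h' : ∑ i, piv i * E n i j = piv j := by
      have : ∀ i, piv i * E n i j = (w n)⁻¹ * (piv i * S n i j) := fun i => by
        simp only [E, Matrix.smul_apply, smul_eq_mul]; ring
      simp only [this, ← Finset.mul_sum]
      rw [inv_mul_eq_iff_eq_mul₀ (hwpos n le_rfl).ne']
      exact h
    simp only [hd, ← Finset.sum_mul, hpiv1, one_mul] at h'
    rw [hd, h']
  have hej : ∀ j : Fin n, e j = b ⟨j, by omega⟩ := fun j =>
    MicchelliWilloughby.extendZero_val b j.castSucc
  have hkey : ∀ y, MicchelliWilloughby.geomSumCdf (fun j : Fin n => e j) t t * piv x ≤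
      (P ^ t) y x := fun y => by
    have h := MicchelliWilloughby.geomSumCdf_mul_le E (fun j : Fin n => e j)
      (fun j => (hβ0 _).trans_eq (hej j).symm)
      (fun j => (hlt j j.2).le) (fun j => hEstep j j.2) hElast hEnn (le_refl t) y x
    rw [hEpi] at h
    simpa [E, hw, hS, MicchelliWilloughby.specProd] using h
  have hG : MicchelliWilloughby.geomSumCdf (fun j : Fin n => e j) t t ≤
      (∑ y, μ y * (P ^ t) y x) / piv x := by
    rw [le_div_iff₀ hx, ← one_mul (_ * _), ← hμ1, Finset.sum_mul]
    exact Finset.sum_le_sum fun y _ => mul_le_mul_of_nonneg_left (hkey y) (hμ0 y)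
  refine sub_le_sub_left (le_of_eq_of_le ?_ hG) 1
  simp only [MicchelliWilloughby.geomSumCdf, hej]
  rfl
end
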